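/- arXiv:1101.5470 — 6 statements merged into one kernel-verified Lean document; each statement's English description precedes it below -/
import Mathlib

section
/- Let A₁, A₂, A₃ be two-dimensional vector spaces over the field 𝔽₂ with two elements, and let B be a linear subspace of A₁ ⊕ A₂ ⊕ A₃ satisfying property (P): for any b₁, b₂ ∈ B, the number of indices i ∈ {1,2,3} such that the canonical projection of the span of {b₁, b₂} onto A_i is surjective is even. Assume B is maximal among subspaces satisfying (P). Then, up to a permutation of the indices {1,2,3}, one of the following holds: (1) dim(B ∩ A_i) = 1 for each i = 1,2,3 and B = (B ∩ A₁) ⊕ (B ∩ A₂) ⊕ (B ∩ A₃); (2) there exist a linear isomorphism f : A₁ → A₂ and a nonzero element a₃ ∈ A₃ such that B = {a + f(a) : a ∈ A₁} ⊕ 𝔽₂a₃; (3) there exist linear isomorphisms f² : A₁ → A₂ and f³ : A₁ → A₃ and a basis {a, b} of A₁ such that B = 𝔽₂(a + f²(a) + f³(a)) ⊕ 𝔽₂(b + f²(b)) ⊕ 𝔽₂(b + f³(b)). -/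
/-- The alternating form in coordinates. -/
def ddF (V : Type*) [AddCommGroup V] [Module (ZMod 2) V]
    (e : V ≃ₗ[ZMod 2] (ZMod 2 × ZMod 2)) (x y : V) : ZMod 2 :=
  (e x).1 * (e y).2 + (e x).2 * (e y).1

section one
variable {V : Type*} [AddCommGroup V] [Module (ZMod 2) V] (e : V ≃ₗ[ZMod 2] (ZMod 2 × ZMod 2))

lemma dd_add_left (x y z : V) : ddF V e (x + y) z = ddF V e x z + ddF V e y z := by
  simp [ddF]; ring
lemma dd_smul_left (c : ZMod 2) (x z : V) : ddF V e (c • x) z = c * ddF V e x z := by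
  simp [ddF]; ring
lemma dd_symm (x y : V) : ddF V e x y = ddF V e y x := by
  simp [ddF]; ring
lemma dd_add_right (x y z : V) : ddF V e z (x + y) = ddF V e z x + ddF V e z y := by
  simp [ddF]; ring
lemma dd_smul_right (c : ZMod 2) (x z : V) : ddF V e z (c • x) = c * ddF V e z x := by
  simp [ddF]; ring
lemma dd_self (x : V) : ddF V e x x = 0 := by
  simp only [ddF]; generalize e x = a; revert a; decide
lemma dd_zero_left (x : V) : ddF V e 0 x = 0 := by simp [ddF]
lemma dd_zero_right (x : V) : ddF V e x 0 = 0 := by simp [ddF]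
lemma dd_ne (x y : V) (h : ddF V e x y ≠ 0) : ddF V e x y = 1 := by
  generalize ddF V e x y = a at *; revert a; decide

lemma dd_eq_zero (x y : V) (h : ddF V e x y = 0) : x = 0 ∨ y = 0 ∨ x = y := by
  have : ∀ a b : ZMod 2 × ZMod 2, a.1 * b.2 + a.2 * b.1 = 0 → a = 0 ∨ b = 0 ∨ a = b := by decide
  have := this (e x) (e y) h
  simpa using this

lemma dd_expand (x y v : V) (h : ddF V e x y = 1) :
    v = ddF V e v y • x + ddF V e v x • y := by
  have : ∀ a b c : ZMod 2 × ZMod 2, a.1 * b.2 + a.2 * b.1 = 1 →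
    c = (c.1 * b.2 + c.2 * b.1) • a + (c.1 * a.2 + c.2 * a.1) • b := by decide
  apply e.injective
  rw [map_add, map_smul, map_smul]
  exact this _ _ _ h

lemma dd_exists (x y : V) (h : ddF V e x y = 0) :
    ∃ c : V, c ≠ 0 ∧ ddF V e c x = 0 ∧ ddF V e c y = 0 := by
  have : ∀ a b : ZMod 2 × ZMod 2, a.1 * b.2 + a.2 * b.1 = 0 →
    ∃ c : ZMod 2 × ZMod 2, c ≠ 0 ∧ c.1 * a.2 + c.2 * a.1 = 0 ∧ c.1 * b.2 + c.2 * b.1 = 0 := by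
    decide
  obtain ⟨c, h0, h1, h2⟩ := this _ _ h
  refine ⟨e.symm c, by simpa using h0, ?_, ?_⟩ <;> simpa [ddF]

include e in
lemma exists_ne_V : ∃ c : V, c ≠ 0 := by
  obtain ⟨c, h, _⟩ := dd_exists e 0 0 (dd_self e 0)
  exact ⟨c, h⟩

include e in
lemma finrank_V : Module.finrank (ZMod 2) V = 2 := by
  rw [e.finrank_eq]; simp

lemma dd_span (x y : V) : Submodule.span (ZMod 2) {x, y} = ⊤ ↔ ddF V e x y = 1 := by
  constructor
  · intro h
    by_contra h1
    have h0 : ddF V e x y = 0 := by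
      by_contra h2; exact h1 (dd_ne e x y h2)
    have key : ∃ w : V, Submodule.span (ZMod 2) {x, y} ≤ Submodule.span (ZMod 2) {w} := by
      rcases dd_eq_zero e x y h0 with h | h | h
      · refine ⟨y, Submodule.span_le.2 ?_⟩
        rintro z (rfl | rfl)
        · rw [h]; exact Submodule.zero_mem _
        · exact Submodule.mem_span_singleton_self _
      · refine ⟨x, Submodule.span_le.2 ?_⟩
        rintro z (rfl | rfl)
        · exact Submodule.mem_span_singleton_self _
        · rw [h]; exact Submodule.zero_mem _
      · refine ⟨x, ?_⟩
        rw [h]; simp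
    obtain ⟨w, hw⟩ := key
    rw [h, top_le_iff] at hw
    have h3 := finrank_span_le_card (R := ZMod 2) ({w} : Set V)
    rw [hw, finrank_top, finrank_V e] at h3
    simp at h3
  · intro h
    rw [eq_top_iff]
    intro v _
    rw [dd_expand e x y v h]
    exact Submodule.add_mem _ (Submodule.smul_mem _ _ (Submodule.subset_span (by simp)))
      (Submodule.smul_mem _ _ (Submodule.subset_span (by simp)))

lemma dd_basis (x y : V) (h : ddF V e x y = 1) :
    ∃ b : Module.Basis (Fin 2) (ZMod 2) V, b 0 = x ∧ b 1 = y := by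
  have hs : ⊤ ≤ Submodule.span (ZMod 2) (Set.range ![x, y]) := by
    rw [Matrix.range_cons, Matrix.range_cons, Matrix.range_empty, Set.union_empty,
      Set.singleton_union, (dd_span e x y).2 h]
  have : Module.Finite (ZMod 2) V := Module.Finite.equiv e.symm
  refine ⟨basisOfTopLeSpanOfCardEqFinrank ![x, y] hs (by simp [finrank_V e]), ?_, ?_⟩ <;> simp

end one

lemma dd_equiv {V W : Type*} [AddCommGroup V] [Module (ZMod 2) V]
    [AddCommGroup W] [Module (ZMod 2) W]
    (e : V ≃ₗ[ZMod 2] (ZMod 2 × ZMod 2)) (e' : W ≃ₗ[ZMod 2] (ZMod 2 × ZMod 2))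
    (x y : V) (h : ddF V e x y = 1) (x' y' : W) (h' : ddF W e' x' y' = 1) :
    ∃ f : V ≃ₗ[ZMod 2] W, f x = x' ∧ f y = y' := by
  obtain ⟨b, rfl, rfl⟩ := dd_basis e x y h
  obtain ⟨b', rfl, rfl⟩ := dd_basis e' x' y' h'
  exact ⟨b.equiv b' (Equiv.refl _), by simp, by simp⟩

section three
variable {A : Fin 3 → Type*} [∀ i, AddCommGroup (A i)] [∀ i, Module (ZMod 2) (A i)]
  (e : ∀ i, A i ≃ₗ[ZMod 2] (ZMod 2 × ZMod 2))

/-- The symplectic form on the direct sum. -/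
def omF (x y : ∀ i, A i) : ZMod 2 := ∑ i, ddF (A i) (e i) (x i) (y i)

lemma om_add_left (x y z : ∀ i, A i) : omF e (x + y) z = omF e x z + omF e y z := by
  simp [omF, dd_add_left, Finset.sum_add_distrib]
lemma om_smul_left (c : ZMod 2) (x z : ∀ i, A i) : omF e (c • x) z = c * omF e x z := by
  simp [omF, dd_smul_left, Finset.mul_sum]
lemma om_symm (x y : ∀ i, A i) : omF e x y = omF e y x := by
  unfold omF; exact Finset.sum_congr rfl fun i _ => dd_symm _ _ _
lemma om_self (x : ∀ i, A i) : omF e x x = 0 := by simp [omF, dd_self]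
lemma om_single (i : Fin 3) (v : A i) (b : ∀ i, A i) :
    omF e (Pi.single i v) b = ddF (A i) (e i) v (b i) := by
  unfold omF
  rw [Finset.sum_eq_single i]
  · simp
  · intro j _ hj; simp [Pi.single_eq_of_ne hj, dd_zero_left]
  · simp

lemma om_perm (σ : Equiv.Perm (Fin 3)) (x y : ∀ i, A i) :
    omF e x y = ddF _ (e (σ 0)) (x (σ 0)) (y (σ 0)) + ddF _ (e (σ 1)) (x (σ 1)) (y (σ 1))
      + ddF _ (e (σ 2)) (x (σ 2)) (y (σ 2)) := by
  unfold omF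
  rw [← Equiv.sum_comp σ, Fin.sum_univ_three]

lemma om_even (x y : ∀ i, A i) :
    Even (Nat.card {i : Fin 3 //
        Submodule.map (LinearMap.proj i) (Submodule.span (ZMod 2) {x, y}) = ⊤})
      ↔ omF e x y = 0 := by
  classical
  have h : ∀ i : Fin 3, Submodule.map (LinearMap.proj i) (Submodule.span (ZMod 2) {x, y})
      = (⊤ : Submodule (ZMod 2) (A i)) ↔ ddF _ (e i) (x i) (y i) = 1 := by
    intro i
    rw [Submodule.map_span, Set.image_pair, ← dd_span]; rfl
  rw [Nat.card_congr (Equiv.subtypeEquivRight h), Nat.card_eq_fintype_card, Fintype.card_subtype,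
    ← ZMod.natCast_eq_zero_iff_even, Finset.card_filter]
  push_cast
  have : (∑ i, if ddF _ (e i) (x i) (y i) = 1 then (1 : ZMod 2) else 0) = omF e x y := by
    unfold omF
    refine Finset.sum_congr rfl fun i _ => ?_
    generalize ddF _ (e i) (x i) (y i) = a
    revert a; decide
  rw [this]

lemma ext_perm (σ : Equiv.Perm (Fin 3)) (x y : ∀ i, A i) (h0 : x (σ 0) = y (σ 0))
    (h1 : x (σ 1) = y (σ 1)) (h2 : x (σ 2) = y (σ 2)) : x = y := by
  funext i
  obtain ⟨j, rfl⟩ := σ.surjective i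
  fin_cases j
  · exact h0
  · exact h1
  · exact h2

variable (B : Submodule (ZMod 2) (∀ i, A i))
  (hBB : ∀ v, v ∈ B ↔ ∀ b ∈ B, omF e v b = 0)

/-- `B` meets the summand with index `i`. -/
def NN (i : Fin 3) : Prop := ∃ a : A i, a ≠ 0 ∧ Pi.single i a ∈ B

include hBB

lemma single_mem (i : Fin 3) (v : A i) :
    Pi.single i v ∈ B ↔ ∀ b ∈ B, ddF _ (e i) v (b i) = 0 := by
  rw [hBB]; simp only [om_single]

lemma exists_pair (i : Fin 3) (h : ¬ NN B i) :
    ∃ x ∈ B, ∃ y ∈ B, ddF _ (e i) (x i) (y i) = 1 := by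
  by_contra hc
  push Not at hc
  have h0 : ∀ x ∈ B, ∀ y ∈ B, ddF _ (e i) (x i) (y i) = 0 := fun x hx y hy => by
    by_contra h1; exact hc x hx y hy (dd_ne _ _ _ h1)
  by_cases hx : ∃ x ∈ B, x i ≠ 0
  · obtain ⟨x, hx, hx0⟩ := hx
    exact h ⟨x i, hx0, (single_mem e B hBB i _).2 fun b hb => h0 x hx b hb⟩
  · push Not at hx
    obtain ⟨c, hc⟩ := exists_ne_V (e i)
    refine h ⟨c, hc, (single_mem e B hBB i _).2 fun b hb => ?_⟩
    rw [hx b hb, dd_zero_right]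

lemma coord_of_single (i : Fin 3) (a : A i) (ha : a ≠ 0) (hs : Pi.single i a ∈ B)
    (x : ∀ i, A i) (hx : x ∈ B) : ∃ c : ZMod 2, x i = c • a := by
  have := (single_mem e B hBB i a).1 hs x hx
  rcases dd_eq_zero _ _ _ this with h | h | h
  · exact absurd h ha
  · exact ⟨0, by simp [h]⟩
  · exact ⟨1, by simp [h]⟩

lemma case_third (σ : Equiv.Perm (Fin 3)) (h0 : NN B (σ 0)) (h1 : NN B (σ 1)) : NN B (σ 2) := by
  by_contra h
  obtain ⟨x, hx, y, hy, hxy⟩ := exists_pair e B hBB _ h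
  obtain ⟨a, ha, has⟩ := h0
  obtain ⟨b, hb, hbs⟩ := h1
  have key : ∀ x ∈ B, x (σ 2) = 0 := by
    intro x hx
    obtain ⟨c, hc⟩ := coord_of_single e B hBB _ a ha has x hx
    obtain ⟨c', hc'⟩ := coord_of_single e B hBB _ b hb hbs x hx
    by_contra hne
    refine h ⟨x (σ 2), hne, ?_⟩
    have : Pi.single (σ 2) (x (σ 2)) = x - c • Pi.single (σ 0) a - c' • Pi.single (σ 1) b := by
      apply ext_perm σ <;> simp [hc, hc', Pi.single_apply]
    rw [this]
    exact B.sub_mem (B.sub_mem hx (B.smul_mem _ has)) (B.smul_mem _ hbs)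
  rw [key x hx, dd_zero_left] at hxy
  exact zero_ne_one hxy

lemma case_one (h : ∀ i, NN B i) :
    ((∀ i, Module.finrank (ZMod 2)
        ↥(B ⊓ Submodule.map (LinearMap.single (ZMod 2) A i) ⊤) = 1) ∧
      B = (B ⊓ Submodule.map (LinearMap.single (ZMod 2) A 0) ⊤)
        ⊔ (B ⊓ Submodule.map (LinearMap.single (ZMod 2) A 1) ⊤)
        ⊔ (B ⊓ Submodule.map (LinearMap.single (ZMod 2) A 2) ⊤)) := by
  choose a ha has using h
  constructor
  · intro i
    have : B ⊓ Submodule.map (LinearMap.single (ZMod 2) A i) ⊤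
        = Submodule.span (ZMod 2) {Pi.single i (a i)} := by
      ext x
      rw [Submodule.mem_span_singleton]
      constructor
      · rintro ⟨hx, v, -, rfl⟩
        obtain ⟨c, hc⟩ := coord_of_single e B hBB i _ (ha i) (has i) _ hx
        refine ⟨c, ?_⟩
        simp only [LinearMap.coe_single, Pi.single_eq_same] at hc ⊢
        rw [hc, Pi.single_smul]
      · rintro ⟨c, rfl⟩
        refine ⟨B.smul_mem _ (has i), c • a i, trivial, ?_⟩
        simp [Pi.single_smul]
    rw [this]
    exact finrank_span_singleton (by simpa using ha i)
  · apply le_antisymm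
    · intro x hx
      have hm : ∀ i, Pi.single i (x i) ∈ B ⊓ Submodule.map (LinearMap.single (ZMod 2) A i) ⊤ := by
        intro i
        obtain ⟨c, hc⟩ := coord_of_single e B hBB i _ (ha i) (has i) _ hx
        refine ⟨?_, x i, trivial, rfl⟩
        rw [hc, Pi.single_smul]
        exact B.smul_mem _ (has i)
      have : x = Pi.single 0 (x 0) + Pi.single 1 (x 1) + Pi.single 2 (x 2) := by
        apply ext_perm 1 <;> simp [Pi.single_apply]
      rw [this]
      exact Submodule.add_mem_sup (Submodule.add_mem_sup (hm 0) (hm 1)) (hm 2)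
    · exact sup_le (sup_le inf_le_left inf_le_left) inf_le_left

lemma case_two (σ : Equiv.Perm (Fin 3)) (h0 : ¬ NN B (σ 0)) (h1 : ¬ NN B (σ 1))
    (h2 : NN B (σ 2)) :
    (∃ f : A (σ 0) ≃ₗ[ZMod 2] A (σ 1), ∃ a₃ : A (σ 2), a₃ ≠ 0 ∧
        ∀ x : ∀ i, A i, x ∈ B ↔
          (x (σ 1) = f (x (σ 0)) ∧ ∃ c : ZMod 2, x (σ 2) = c • a₃)) := by
  obtain ⟨x, hx, y, hy, hxy⟩ := exists_pair e B hBB _ h0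
  obtain ⟨a, ha, has⟩ := h2
  obtain ⟨p, hp⟩ := coord_of_single e B hBB _ a ha has x hx
  obtain ⟨q, hq⟩ := coord_of_single e B hBB _ a ha has y hy
  have hom := (hBB x).1 hx y hy
  rw [om_perm e σ, hxy, hp, hq, dd_smul_left, dd_smul_right, dd_self] at hom
  have hxy1 : ddF _ (e (σ 1)) (x (σ 1)) (y (σ 1)) = 1 := by
    generalize ddF _ (e (σ 1)) (x (σ 1)) (y (σ 1)) = t at *
    clear hp hq
    revert hom; revert p q t; decide
  obtain ⟨f, hfx, hfy⟩ := dd_equiv _ _ _ _ hxy _ _ hxy1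
  refine ⟨f, a, ha, fun z => ⟨fun hz => ?_, ?_⟩⟩
  · obtain ⟨r, hr⟩ := coord_of_single e B hBB _ a ha has z hz
    refine ⟨?_, r, hr⟩
    have hz0 := dd_expand _ _ _ (z (σ 0)) hxy
    generalize ddF _ (e (σ 0)) (z (σ 0)) (y (σ 0)) = α at hz0
    generalize ddF _ (e (σ 0)) (z (σ 0)) (x (σ 0)) = β at hz0
    by_contra hne
    apply h1
    refine ⟨z (σ 1) - f (z (σ 0)), sub_ne_zero.2 hne, ?_⟩
    have : Pi.single (σ 1) (z (σ 1) - f (z (σ 0)))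
        = z - α • x - β • y - (r - α * p - β * q) • Pi.single (σ 2) a := by
      apply ext_perm σ
      · simp [Pi.single_apply, hz0]
      · simp [Pi.single_apply, hz0, hfx, hfy]
        abel
      · simp [Pi.single_apply, hp, hq, hr]
        module
    rw [this]
    exact B.sub_mem (B.sub_mem (B.sub_mem hz (B.smul_mem _ hx)) (B.smul_mem _ hy))
      (B.smul_mem _ has)
  · rintro ⟨hz1, r, hr⟩
    have hz0 := dd_expand _ _ _ (z (σ 0)) hxy
    generalize ddF _ (e (σ 0)) (z (σ 0)) (y (σ 0)) = α at hz0
    generalize ddF _ (e (σ 0)) (z (σ 0)) (x (σ 0)) = β at hz0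
    have : z = α • x + β • y + (r - α * p - β * q) • Pi.single (σ 2) a := by
      apply ext_perm σ
      · simp [Pi.single_apply, ← hz0]
      · simp [Pi.single_apply, hz1, ← hfx, ← hfy, ← map_smul, ← map_add, ← hz0]
      · simp [hp, hq, hr]
        module
    rw [this]
    exact B.add_mem (B.add_mem (B.smul_mem _ hx) (B.smul_mem _ hy)) (B.smul_mem _ has)

lemma exists_ker (h : ∀ i, ¬ NN B i) (i : Fin 3) : ∃ k ∈ B, k i = 0 ∧ ∀ j, j ≠ i → k j ≠ 0 := by
  have h1 : ∃ k ∈ B, k i = 0 ∧ k ≠ 0 := by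
    by_contra hc
    push Not at hc
    obtain ⟨x, hx, y, hy, hxy⟩ := exists_pair e B hBB i (h i)
    have hspan : ∀ z ∈ B, ∃ α β : ZMod 2, z = α • x + β • y := by
      intro z hz
      have hz0 := dd_expand _ _ _ (z i) hxy
      refine ⟨_, _, sub_eq_zero.1 (hc (z - (ddF _ (e i) (z i) (y i) • x
        + ddF _ (e i) (z i) (x i) • y)) ?_ ?_)⟩
      · exact B.sub_mem hz (B.add_mem (B.smul_mem _ hx) (B.smul_mem _ hy))
      · exact sub_eq_zero.2 hz0
    have hj : ∃ j, ddF _ (e j) (x j) (y j) = 0 := by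
      by_contra hn
      push Not at hn
      have hom := (hBB x).1 hx y hy
      rw [om_perm e 1, dd_ne _ _ _ (hn _), dd_ne _ _ _ (hn _), dd_ne _ _ _ (hn _)] at hom
      revert hom; decide
    obtain ⟨j, hj⟩ := hj
    obtain ⟨c, hc0, hcx, hcy⟩ := dd_exists _ _ _ hj
    refine h j ⟨c, hc0, (single_mem e B hBB j c).2 fun b hb => ?_⟩
    obtain ⟨α, β, rfl⟩ := hspan b hb
    simp [dd_add_right, dd_smul_right, hcx, hcy]
  obtain ⟨k, hk, hki, hk0⟩ := h1
  refine ⟨k, hk, hki, fun j hj hkj => ?_⟩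
  obtain ⟨l, hl⟩ : ∃ l : Fin 3, ∀ m, m ≠ l → m = i ∨ m = j := by
    clear hki hkj
    revert i j; decide
  have hs : k = Pi.single l (k l) := by
    funext m
    by_cases hm : m = l
    · subst hm; simp
    · rw [Pi.single_eq_of_ne hm]
      rcases hl m hm with rfl | rfl <;> assumption
  refine h l ⟨k l, fun h0 => hk0 ?_, hs ▸ hk⟩
  rw [hs, h0, Pi.single_zero]

lemma case_three (h : ∀ i, ¬ NN B i) :
    (∃ f₂ : A 0 ≃ₗ[ZMod 2] A 1, ∃ f₃ : A 0 ≃ₗ[ZMod 2] A 2,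
        ∃ bas : Module.Basis (Fin 2) (ZMod 2) (A 0),
        ∀ x : ∀ i, A i, x ∈ B ↔ ∃ c₁ c₂ c₃ : ZMod 2,
          x 0 = c₁ • bas 0 + (c₂ + c₃) • bas 1 ∧
          x 1 = c₁ • f₂ (bas 0) + c₂ • f₂ (bas 1) ∧
          x 2 = c₁ • f₃ (bas 0) + c₃ • f₃ (bas 1)) := by
  have om3 : ∀ x ∈ B, ∀ y ∈ B, ddF _ (e 0) (x 0) (y 0) + ddF _ (e 1) (x 1) (y 1)
      + ddF _ (e 2) (x 2) (y 2) = 0 := fun x hx y hy => by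
    have := (hBB x).1 hx y hy
    rwa [om_perm e 1] at this
  obtain ⟨k0, hk0, hk00, hk0n⟩ := exists_ker e B hBB h 0
  obtain ⟨k1, hk1, hk11, hk1n⟩ := exists_ker e B hBB h 1
  obtain ⟨k2, hk2, hk22, hk2n⟩ := exists_ker e B hBB h 2
  have e0 : k1 0 = k2 0 := by
    have := om3 _ hk1 _ hk2
    rw [hk11, hk22, dd_zero_left, dd_zero_right, add_zero, add_zero] at this
    rcases dd_eq_zero _ _ _ this with h | h | h
    · exact absurd h (hk1n 0 (by decide))
    · exact absurd h (hk2n 0 (by decide))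
    · exact h
  have ht : k2 0 ≠ 0 := hk2n 0 (by decide)
  obtain ⟨w, hw, hwt⟩ : ∃ w ∈ B, ddF _ (e 0) (w 0) (k2 0) = 1 := by
    obtain ⟨x, hx, y, hy, hxy⟩ := exists_pair e B hBB 0 (h 0)
    by_contra hc
    push Not at hc
    have hx0 : ddF _ (e 0) (k2 0) (x 0) = 0 := by
      by_contra h1; exact hc x hx (by rw [dd_symm]; exact dd_ne _ _ _ h1)
    have hy0 : ddF _ (e 0) (k2 0) (y 0) = 0 := by
      by_contra h1; exact hc y hy (by rw [dd_symm]; exact dd_ne _ _ _ h1)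
    apply ht
    rw [dd_expand _ _ _ (k2 0) hxy, hx0, hy0]; simp
  have hz2 : ∀ z t : ZMod 2, z + t = 0 → t = z := by decide
  have r1 : ∀ z ∈ B, ddF _ (e 1) (z 1) (k2 1) = ddF _ (e 0) (z 0) (k2 0) := fun z hz => by
    have := om3 z hz _ hk2
    rw [hk22, dd_zero_right, add_zero] at this
    exact hz2 _ _ this
  have r2 : ∀ z ∈ B, ddF _ (e 2) (z 2) (k1 2) = ddF _ (e 0) (z 0) (k2 0) := fun z hz => by
    have := om3 z hz _ hk1
    rw [hk11, dd_zero_right, add_zero, e0] at this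
    exact hz2 _ _ this
  have hw1 := (r1 w hw).trans hwt
  have hw2 := (r2 w hw).trans hwt
  obtain ⟨bas, hb0, hb1⟩ := dd_basis _ _ _ hwt
  obtain ⟨f, hf0, hf1⟩ := dd_equiv _ _ _ _ hwt _ _ hw1
  obtain ⟨g, hg0, hg1⟩ := dd_equiv _ _ _ _ hwt _ _ hw2
  refine ⟨f, g, bas, fun z => ?_⟩
  rw [hb0, hb1, hf0, hf1, hg0, hg1]
  constructor
  · intro hz
    refine ⟨ddF _ (e 0) (z 0) (k2 0), ddF _ (e 1) (z 1) (w 1), ddF _ (e 2) (z 2) (w 2), ?_, ?_, ?_⟩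
    · have hs : ddF _ (e 1) (z 1) (w 1) + ddF _ (e 2) (z 2) (w 2) = ddF _ (e 0) (z 0) (w 0) :=
        hz2 _ _ (by rw [← add_assoc]; exact om3 z hz w hw)
      rw [hs]; exact dd_expand _ _ _ _ hwt
    · rw [← r1 z hz]; exact dd_expand _ _ _ _ hw1
    · rw [← r2 z hz]; exact dd_expand _ _ _ _ hw2
  · rintro ⟨c1, c2, c3, h0, h1, h2⟩
    have : z = c1 • w + c2 • k2 + c3 • k1 := by
      apply ext_perm 1
      · simp [h0, e0, add_smul, add_assoc]
      · simp [h1, hk11]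
      · simp [h2, hk22]
    rw [this]
    exact B.add_mem (B.add_mem (B.smul_mem _ hw) (B.smul_mem _ hk2)) (B.smul_mem _ hk1)

end three


/-- classification, up to permutation of the indices, of the maximal
subspaces `B` of `A₁ ⊕ A₂ ⊕ A₃` (each `Aᵢ` two-dimensional over `𝔽₂`) with the
property that for any `b₁, b₂ ∈ B` the number of indices `i` such that the
projection of the span of `{b₁, b₂}` onto `Aᵢ` is surjective is even. -/
theorem stmt_0 {A : Fin 3 → Type*} [∀ i, AddCommGroup (A i)] [∀ i, Module (ZMod 2) (A i)]
    (hdim : ∀ i, Module.finrank (ZMod 2) (A i) = 2)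
    (P : Submodule (ZMod 2) (∀ i, A i) → Prop)
    (hP : ∀ C : Submodule (ZMod 2) (∀ i, A i), P C ↔
      ∀ b₁ ∈ C, ∀ b₂ ∈ C, Even (Nat.card {i : Fin 3 //
        Submodule.map (LinearMap.proj i) (Submodule.span (ZMod 2) {b₁, b₂}) = ⊤}))
    (B : Submodule (ZMod 2) (∀ i, A i)) (hB : P B)
    (hmax : ∀ C, P C → B ≤ C → C = B) :
    ((∀ i, Module.finrank (ZMod 2)
        ↥(B ⊓ Submodule.map (LinearMap.single (ZMod 2) A i) ⊤) = 1) ∧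
      B = (B ⊓ Submodule.map (LinearMap.single (ZMod 2) A 0) ⊤)
        ⊔ (B ⊓ Submodule.map (LinearMap.single (ZMod 2) A 1) ⊤)
        ⊔ (B ⊓ Submodule.map (LinearMap.single (ZMod 2) A 2) ⊤)) ∨
    (∃ σ : Equiv.Perm (Fin 3),
      (∃ f : A (σ 0) ≃ₗ[ZMod 2] A (σ 1), ∃ a₃ : A (σ 2), a₃ ≠ 0 ∧
        ∀ x : ∀ i, A i, x ∈ B ↔
          (x (σ 1) = f (x (σ 0)) ∧ ∃ c : ZMod 2, x (σ 2) = c • a₃)) ∨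
      (∃ f₂ : A (σ 0) ≃ₗ[ZMod 2] A (σ 1), ∃ f₃ : A (σ 0) ≃ₗ[ZMod 2] A (σ 2),
        ∃ bas : Module.Basis (Fin 2) (ZMod 2) (A (σ 0)),
        ∀ x : ∀ i, A i, x ∈ B ↔ ∃ c₁ c₂ c₃ : ZMod 2,
          x (σ 0) = c₁ • bas 0 + (c₂ + c₃) • bas 1 ∧
          x (σ 1) = c₁ • f₂ (bas 0) + c₂ • f₂ (bas 1) ∧
          x (σ 2) = c₁ • f₃ (bas 0) + c₃ • f₃ (bas 1))) := by
  have e : ∀ i, A i ≃ₗ[ZMod 2] (ZMod 2 × ZMod 2) := fun i => by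
    have : Module.Finite (ZMod 2) (A i) := Module.finite_of_finrank_pos (by rw [hdim]; norm_num)
    exact LinearEquiv.ofFinrankEq _ _ (by rw [hdim]; simp)
  have hP' : ∀ C, P C ↔ ∀ b₁ ∈ C, ∀ b₂ ∈ C, omF e b₁ b₂ = 0 := fun C => by
    rw [hP]; simp only [om_even e]
  have hBB : ∀ v, v ∈ B ↔ ∀ b ∈ B, omF e v b = 0 := by
    intro v
    refine ⟨fun hv b hb => (hP' B).1 hB v hv b hb, fun hv => ?_⟩
    have hC : P (B ⊔ Submodule.span (ZMod 2) {v}) := by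
      rw [hP']
      intro x hx y hy
      obtain ⟨b, hb, u, hu, rfl⟩ := Submodule.mem_sup.1 hx
      obtain ⟨c, rfl⟩ := Submodule.mem_span_singleton.1 hu
      obtain ⟨b', hb', u', hu', rfl⟩ := Submodule.mem_sup.1 hy
      obtain ⟨c', rfl⟩ := Submodule.mem_span_singleton.1 hu'
      rw [om_add_left, om_smul_left, om_symm e b, om_symm e v, om_add_left, om_add_left,
        om_smul_left, om_smul_left, om_self, om_symm e b' v, hv b hb, hv b' hb',
        (hP' B).1 hB b' hb' b hb]
      simp
    rw [← hmax _ hC le_sup_left]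
    exact Submodule.mem_sup_right (Submodule.mem_span_singleton_self v)
  by_cases h : ∃ i, NN B i
  · obtain ⟨i, hi⟩ := h
    by_cases h' : ∃ j, i ≠ j ∧ NN B j
    · left
      obtain ⟨j, hij, hj⟩ := h'
      obtain ⟨σ, rfl, rfl⟩ : ∃ σ : Equiv.Perm (Fin 3), σ 0 = i ∧ σ 1 = j := by
        clear hi hj
        revert i j; decide
      apply case_one e B hBB
      intro l
      obtain ⟨m, rfl⟩ := σ.surjective l
      fin_cases m
      · exact hi
      · exact hj
      · exact case_third e B hBB σ hi hj
    · right
      obtain ⟨σ, rfl⟩ : ∃ σ : Equiv.Perm (Fin 3), σ 2 = i := ⟨Equiv.swap 2 i, by simp⟩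
      refine ⟨σ, Or.inl (case_two e B hBB σ (fun hn => h' ⟨_, ?_, hn⟩)
        (fun hn => h' ⟨_, ?_, hn⟩) hi)⟩ <;> simp
  · right
    exact ⟨1, Or.inr (case_three e B hBB fun i hi => h ⟨i, hi⟩)⟩
end

section
/- Let Q₈ denote the quaternion group {±1, ±i, ±j, ±k} of order 8, and let K be the subgroup of Q₈ × Q₈ × Q₈ consisting of the triples (ε₁, ε₂, ε₃) with each ε_l ∈ {1, −1} and ε₁ε₂ε₃ = 1. Set G = (Q₈ × Q₈ × Q₈)/K. Then every maximal abelian subgroup H of G is isomorphic to ℤ/2 × ℤ/2 × ℤ/4. -/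
/-- A subgroup is maximal abelian if it is commutative and every commutative
subgroup containing it equals it. -/
def IsMaximalAbelian {G : Type*} [Group G] (H : Subgroup G) : Prop :=
  IsMulCommutative H ∧ ∀ H' : Subgroup G, IsMulCommutative H' → H ≤ H' → H' = H

namespace QQ

abbrev Q8 := QuaternionGroup 2
abbrev FF := ZMod 2 × ZMod 2
abbrev VV := Fin 3 → FF

def cw (p : FF) : ZMod 2 := p.1 + p.2 + p.1 * p.2

set_option synthInstance.maxHeartbeats 400000 in
set_option synthInstance.maxSize 2000 in
set_option maxRecDepth 100000 in
/-- The sum of three anisotropic planes has no totally singular subspace of dimension three. -/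
theorem aniso : ∀ a b c : FF, cw a + cw b + cw c = 0 → ¬ (a = 0 ∧ b = 0 ∧ c = 0) →
    ∀ a2 b2 c2 : FF, cw a2 + cw b2 + cw c2 = 0 → cw (a+a2) + cw (b+b2) + cw (c+c2) = 0 →
    ¬ (a2 = 0 ∧ b2 = 0 ∧ c2 = 0) → ¬ (a2 = a ∧ b2 = b ∧ c2 = c) →
    ∀ a3 b3 c3 : FF, cw a3 + cw b3 + cw c3 = 0 →
    cw (a+a3) + cw (b+b3) + cw (c+c3) = 0 →
    cw (a2+a3) + cw (b2+b3) + cw (c2+c3) = 0 →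
    ((a3 = 0 ∧ b3 = 0 ∧ c3 = 0) ∨ (a3 = a ∧ b3 = b ∧ c3 = c) ∨
      (a3 = a2 ∧ b3 = b2 ∧ c3 = c2) ∨ (a3 = a+a2 ∧ b3 = b+b2 ∧ c3 = c+c2)) := by
  decide +kernel

def qq (v : VV) : ZMod 2 := cw (v 0) + cw (v 1) + cw (v 2)

def b2 (p q : FF) : ZMod 2 := p.1 * q.2 + p.2 * q.1

def bb : LinearMap.BilinForm (ZMod 2) VV :=
  LinearMap.mk₂ (ZMod 2) (fun x y => b2 (x 0) (y 0) + b2 (x 1) (y 1) + b2 (x 2) (y 2))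
    (by intros; simp [b2]; ring) (by intros; simp [b2]; ring)
    (by intros; simp [b2]; ring) (by intros; simp [b2]; ring)

theorem bb_apply (x y : VV) :
    bb x y = b2 (x 0) (y 0) + b2 (x 1) (y 1) + b2 (x 2) (y 2) := rfl

theorem bb_symm (x y : VV) : bb x y = bb y x := by
  simp [bb_apply, b2]; ring

theorem b2_zero_right (p : FF) : b2 p 0 = 0 := by simp [b2]

theorem b2_nondeg : ∀ p : FF, (∀ q, b2 p q = 0) → p = 0 := by decide

theorem bb_left (x : VV) (h : ∀ y, bb x y = 0) : x = 0 := by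
  funext i
  apply b2_nondeg
  intro q
  have := h (Pi.single i q)
  fin_cases i <;> simpa [bb_apply, b2_zero_right] using this

theorem bb_nondeg : bb.Nondegenerate :=
  ⟨fun x h => bb_left x h, fun x h => bb_left x fun y => by rw [bb_symm]; exact h y⟩

theorem finrank_VV : Module.finrank (ZMod 2) VV = 6 := by
  simp [Module.finrank_pi_fintype]

theorem card_lagrangian (W : Submodule (ZMod 2) VV) (h : ∀ v, v ∈ W ↔ ∀ w ∈ W, bb w v = 0) :
    Nat.card W = 8 := by
  have h1 : bb.orthogonal W = W := by
    ext v
    rw [h v, LinearMap.BilinForm.mem_orthogonal_iff]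
  have h2 := LinearMap.BilinForm.finrank_orthogonal bb_nondeg W
  have h3 := Submodule.finrank_le W
  rw [finrank_VV] at h2 h3
  rw [h1] at h2
  have h4 : Module.finrank (ZMod 2) W = 3 := by omega
  rw [Module.natCard_eq_pow_finrank (K := ZMod 2), h4]
  simp

theorem exists_ne_of_card (W : Submodule (ZMod 2) VV) (hW : Nat.card W = 8)
    (s : Finset VV) (hs : s.card < 8) : ∃ w ∈ W, w ∉ s := by
  by_contra! hc
  have : (W : Set VV) ⊆ s := fun w hw => hc w hw
  have h1 := Set.ncard_le_ncard this (Finset.finite_toSet s)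
  rw [Set.ncard_coe_finset] at h1
  have : (W : Set VV).ncard = 8 := hW
  omega

theorem exists_qq (W : Submodule (ZMod 2) VV) (hW : Nat.card W = 8) :
    ∃ w ∈ W, qq w ≠ 0 := by
  by_contra! hc
  obtain ⟨x, hx, hx'⟩ := exists_ne_of_card W hW {0} (by simp)
  obtain ⟨y, hy, hy'⟩ := exists_ne_of_card W hW {0, x}
    (lt_of_le_of_lt Finset.card_le_two (by norm_num))
  obtain ⟨w, hw, hw'⟩ := exists_ne_of_card W hW {0, x, y, x + y}
    (lt_of_le_of_lt Finset.card_le_four (by norm_num))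
  have e : ∀ u v : VV, (u 0 = v 0 ∧ u 1 = v 1 ∧ u 2 = v 2) → u = v := by
    rintro u v ⟨h0, h1, h2⟩
    funext i
    fin_cases i <;> assumption
  simp only [Finset.mem_insert, Finset.mem_singleton, not_or] at hx' hy' hw'
  have hc1 : ∀ u ∈ W, cw (u 0) + cw (u 1) + cw (u 2) = 0 := hc
  have hc2 : ∀ u ∈ W, ∀ v ∈ W, cw (u 0 + v 0) + cw (u 1 + v 1) + cw (u 2 + v 2) = 0 := by
    intro u hu v hv
    have := hc1 _ (W.add_mem hu hv)
    simpa only [Pi.add_apply] using this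
  have n0 : ∀ u : VV, u ≠ 0 → ¬ (u 0 = 0 ∧ u 1 = 0 ∧ u 2 = 0) := by
    intro u hu h
    exact hu (e u 0 (by simpa only [Pi.zero_apply] using h))
  have hxy : ¬ (y 0 = x 0 ∧ y 1 = x 1 ∧ y 2 = x 2) := fun h => hy'.2 (e y x h)
  have := aniso (x 0) (x 1) (x 2) (hc1 x hx) (n0 x hx') (y 0) (y 1) (y 2) (hc1 y hy)
    (hc2 x hx y hy) (n0 y hy'.1) hxy
    (w 0) (w 1) (w 2) (hc1 w hw) (hc2 x hx w hw) (hc2 y hy w hw)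
  rcases this with h | h | h | h
  · exact n0 w hw'.1 h
  · exact hw'.2.1 (e w x h)
  · exact hw'.2.2.1 (e w y h)
  · exact hw'.2.2.2 (e w (x + y) (by simpa only [Pi.add_apply] using h))

/-- The homomorphism from a cyclic group determined by an element of finite order. -/
def zhom {A : Type*} [CommGroup A] (n : ℕ) (a : A) (ha : a ^ n = 1) : ZMod n →+ Additive A :=
  ZMod.lift n ⟨(zmultiplesHom (Additive A)) (Additive.ofMul a), by
    simp [← ofMul_pow, ha]⟩

theorem zhom_nat {A : Type*} [CommGroup A] (n : ℕ) (a : A) (ha : a ^ n = 1) (k : ℕ) :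
    zhom n a ha (k : ZMod n) = Additive.ofMul (a ^ k) := by
  have := ZMod.lift_coe n ⟨(zmultiplesHom (Additive A)) (Additive.ofMul a), by
    simp [← ofMul_pow, ha]⟩ (k : ℤ)
  rw [Int.cast_natCast] at this
  rw [zhom, this]
  simp

theorem iso_of_card {A : Type*} [CommGroup A] (hA : Nat.card A = 16) (z : A) (hz : z ≠ 1)
    (hzz : z * z = 1) (hsq : ∀ x : A, x * x = 1 ∨ x * x = z) (g : A) (hg : g * g ≠ 1) :
    Nonempty (A ≃* Multiplicative (ZMod 2 × ZMod 2 × ZMod 4)) := by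
  classical
  have hfin : Finite A := Nat.finite_of_card_ne_zero (by omega)
  have hgz : g * g = z := (hsq g).resolve_left hg
  have hg4 : g ^ 4 = 1 := by
    rw [show (4 : ℕ) = 2 + 2 from rfl, pow_add, pow_two, hgz, hzz]
  let s : A →* A := powMonoidHom 2
  have hr : Nat.card s.range ≤ 2 := by
    have hsub : (s.range : Set A) ⊆ ({1, z} : Finset A) := by
      rintro _ ⟨x, rfl⟩
      simpa [s, pow_two] using hsq x
    have h1 := Set.ncard_le_ncard hsub (Finset.finite_toSet _)
    rw [Set.ncard_coe_finset] at h1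
    exact h1.trans Finset.card_le_two
  have hk : 8 ≤ Nat.card s.ker := by
    have h1 := s.ker.card_mul_index
    rw [Subgroup.index_ker, hA] at h1
    nlinarith
  have pick : ∀ t : Finset A, t.card < 8 → ∃ a, a * a = 1 ∧ a ∉ t := by
    intro t ht
    by_contra! hc
    have hsub : (s.ker : Set A) ⊆ t := fun x hx => hc x (by
      have : s x = 1 := hx
      simpa [s, pow_two] using this)
    have h1 := Set.ncard_le_ncard hsub (Finset.finite_toSet _)
    rw [Set.ncard_coe_finset] at h1
    have : (s.ker : Set A).ncard = Nat.card s.ker := rfl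
    omega
  obtain ⟨a, ha, ha'⟩ := pick {1, z} (lt_of_le_of_lt Finset.card_le_two (by norm_num))
  obtain ⟨b, hb, hb'⟩ := pick {1, z, a, a * z}
    (lt_of_le_of_lt Finset.card_le_four (by norm_num))
  simp only [Finset.mem_insert, Finset.mem_singleton, not_or] at ha' hb'
  let f : ZMod 2 × ZMod 2 × ZMod 4 →+ Additive A :=
    (zhom 2 a (by rw [pow_two, ha])).coprod
      ((zhom 2 b (by rw [pow_two, hb])).coprod (zhom 4 g hg4))
  have hf : ∀ i j k : ℕ, f ((i : ZMod 2), (j : ZMod 2), (k : ZMod 4)) =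
      Additive.ofMul (a ^ i * (b ^ j * g ^ k)) := by
    intro i j k
    simp only [f, AddMonoidHom.coprod_apply, zhom_nat, ofMul_mul]
  have hinj : Function.Injective f := by
    rw [injective_iff_map_eq_zero]
    rintro ⟨i, j, k⟩ h
    rw [← ZMod.natCast_zmod_val i, ← ZMod.natCast_zmod_val j, ← ZMod.natCast_zmod_val k, hf] at h
    have h : a ^ i.val * (b ^ j.val * g ^ k.val) = 1 := h
    have two : ∀ m : ZMod 2, m = 0 ∨ m = 1 := by decide
    have ei : i = 0 ∨ i = 1 := two i
    have ej : j = 0 ∨ j = 1 := two j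
    have ek : k.val = 0 ∨ k.val = 1 ∨ k.val = 2 ∨ k.val = 3 := by
      have := ZMod.val_lt k; omega
    have key : k.val = 0 ∨ k.val = 2 := by
      have h2 : (a ^ i.val * (b ^ j.val * g ^ k.val)) ^ 2 = 1 := by rw [h, one_pow]
      have h3 : g ^ (k.val * 2) = 1 := by
        rw [mul_pow, mul_pow, ← pow_mul, ← pow_mul, ← pow_mul, mul_comm i.val, mul_comm j.val,
          pow_mul a, pow_mul b, pow_two a, pow_two b, ha, hb] at h2
        simpa using h2
      rcases ek with e | e | e | e
      · exact Or.inl e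
      · rw [e, one_mul, pow_two] at h3; exact absurd h3 hg
      · exact Or.inr e
      · rw [e, show 3 * 2 = 4 + 2 from rfl, pow_add, hg4, one_mul, pow_two] at h3
        exact absurd h3 hg
    have hk2 : k.val = 0 → k = 0 := fun e => (ZMod.val_eq_zero k).1 e
    have v1 : (1 : ZMod 2).val = 1 := rfl
    have v0 : (0 : ZMod 2).val = 0 := rfl
    have cancel : ∀ u v : A, v * v = 1 → u * v = 1 → u = v := by
      intro u v hv huv
      rw [← mul_one u, ← hv, ← mul_assoc, huv, one_mul]
    rcases key with e | e
    · have := hk2 e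
      subst this
      rcases ei with rfl | rfl <;> rcases ej with rfl | rfl
      · rfl
      · simp [v0, v1] at h; exact absurd h hb'.1
      · simp [v0, v1] at h; exact absurd h ha'.1
      · simp [v1] at h
        exact absurd (cancel a b hb h).symm hb'.2.2.1
    · exfalso
      rw [e, pow_two, hgz, ← mul_assoc] at h
      have h := cancel _ _ hzz h
      rcases ei with rfl | rfl <;> rcases ej with rfl | rfl
      · simp [v0] at h; exact hz h.symm
      · simp [v0, v1] at h; exact hb'.2.1 h
      · simp [v0, v1] at h; exact ha'.2 h
      · simp [v1] at h
        apply hb'.2.2.2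
        rw [← h, ← mul_assoc, ha, one_mul]
  have hinj' : Function.Injective (AddMonoidHom.toMultiplicativeLeft f) := hinj
  have hcard : Nat.card (Multiplicative (ZMod 2 × ZMod 2 × ZMod 4)) = Nat.card A := by
    rw [hA]
    simp
  have hbij : Function.Bijective (AddMonoidHom.toMultiplicativeLeft f) :=
    (Nat.bijective_iff_injective_and_card _).2 ⟨hinj', hcard⟩
  exact ⟨(MulEquiv.ofBijective _ hbij).symm⟩

theorem mem_of_commute {G : Type*} [Group G] {H : Subgroup G} (hH : IsMaximalAbelian H) (g : G)
    (hg : ∀ h ∈ H, h * g = g * h) : g ∈ H := by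
  have hc := hH.1
  have hcomm : ∀ x ∈ (H : Set G) ∪ {g}, ∀ y ∈ (H : Set G) ∪ {g}, x * y = y * x := by
    rintro x (hx | rfl) y (hy | rfl)
    · exact setLike_mul_comm hx hy
    · exact hg x hx
    · exact (hg y hy).symm
    · rfl
  have h1 := hH.2 _ (Subgroup.isMulCommutative_closure hcomm)
    (fun x hx => Subgroup.subset_closure (Or.inl hx))
  rw [← h1]
  exact Subgroup.subset_closure (Or.inr rfl)

theorem abstract_main {G : Type*} [Group G] (φ : G →* Multiplicative VV)
    (hφ : Function.Surjective φ) (z : G) (hz : z ≠ 1) (hker : ∀ g, φ g = 1 ↔ g = 1 ∨ g = z)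
    (hcomm : ∀ g h, g * h = h * g ↔ bb (φ g).toAdd (φ h).toAdd = 0)
    (hsq : ∀ g, g * g = 1 ↔ qq (φ g).toAdd = 0)
    (H : Subgroup G) (hH : IsMaximalAbelian H) :
    Nonempty (H ≃* Multiplicative (ZMod 2 × ZMod 2 × ZMod 4)) := by
  have hc := hH.1
  have hφz : φ z = 1 := (hker z).2 (Or.inr rfl)
  have hzH : z ∈ H := mem_of_commute hH z fun h _ => by
    rw [hcomm, hφz]; simp
  let ψ : H →* Multiplicative VV := φ.comp H.subtype
  let W : Submodule (ZMod 2) VV := AddSubgroup.toZModSubmodule 2 (Subgroup.toAddSubgroup' ψ.range)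
  have hW : ∀ v, v ∈ W ↔ ∃ h ∈ H, (φ h).toAdd = v := by
    intro v
    constructor
    · rintro ⟨h, hh⟩
      exact ⟨h, h.2, hh⟩
    · rintro ⟨h, hh, rfl⟩
      exact ⟨⟨h, hh⟩, rfl⟩
  have hlag : ∀ v, v ∈ W ↔ ∀ w ∈ W, bb w v = 0 := by
    intro v
    constructor
    · intro hv w hw
      obtain ⟨g, hg, rfl⟩ := (hW v).1 hv
      obtain ⟨h, hh, rfl⟩ := (hW w).1 hw
      rw [← hcomm]
      exact setLike_mul_comm hh hg
    · intro hv
      obtain ⟨g, hg⟩ := hφ (Multiplicative.ofAdd v)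
      have hg' : (φ g).toAdd = v := by rw [hg]; rfl
      refine (hW v).2 ⟨g, mem_of_commute hH g fun h hh => ?_, hg'⟩
      rw [hcomm, hg']
      exact hv _ ((hW _).2 ⟨h, hh, rfl⟩)
  have h8 := card_lagrangian W hlag
  obtain ⟨w, hw, hqw⟩ := exists_qq W h8
  obtain ⟨g, hg, rfl⟩ := (hW w).1 hw
  have hr : Nat.card ψ.range = 8 := h8
  have hk : Nat.card ψ.ker = 2 := by
    have : (ψ.ker : Set H) = {1, ⟨z, hzH⟩} := by
      ext x
      have := hker x
      rw [SetLike.mem_coe, MonoidHom.mem_ker, Set.mem_insert_iff, Set.mem_singleton_iff,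
        Subtype.ext_iff, Subtype.ext_iff]
      exact this
    have h2 : (ψ.ker : Set H).ncard = 2 := by
      rw [this, Set.ncard_pair]
      intro h
      exact hz (congrArg Subtype.val h).symm
    exact h2
  have h16 : Nat.card H = 16 := by
    have h1 := ψ.ker.card_mul_index
    rw [Subgroup.index_ker, hr, hk] at h1
    omega
  let _ : CommGroup H :=
    { (inferInstance : Group H) with
      mul_comm := fun x y => Subtype.ext (setLike_mul_comm x.2 y.2) }
  refine iso_of_card (A := H) h16 ⟨z, hzH⟩ (fun h => hz (congrArg Subtype.val h)) ?_ ?_ ⟨g, hg⟩ ?_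
  · apply Subtype.ext
    show z * z = 1
    rw [hsq, hφz]
    simp [qq, cw]
  · intro x
    have h1 : φ (x * x : G) = 1 := by
      rw [map_mul]
      apply Multiplicative.toAdd.injective
      rw [toAdd_mul, toAdd_one]
      funext i
      have : ∀ p : FF, p + p = 0 := by decide
      exact this _
    rcases (hker _).1 h1 with h | h
    · exact Or.inl (Subtype.ext h)
    · exact Or.inr (Subtype.ext h)
  · intro h
    exact hqw ((hsq g).1 (congrArg Subtype.val h))

/-- Reduction of the quaternion group modulo its centre. -/
def pfun : Q8 → FF
  | .a i => ((i : ZMod 4).val, 0)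
  | .xa i => ((i : ZMod 4).val, 1)

theorem pfun_mul : ∀ x y : Q8, pfun (x * y) = pfun x + pfun y := by decide

def ss (e : ZMod 2) : Q8 := if e = 0 then 1 else QuaternionGroup.a 2

theorem pfun_ker : ∀ x : Q8, pfun x = 0 ↔ x = 1 ∨ x = QuaternionGroup.a 2 := by decide

theorem pfun_surj : ∀ p : FF, ∃ x : Q8, pfun x = p := by decide

theorem comm_ss : ∀ x y : Q8, (y * x)⁻¹ * (x * y) = ss (b2 (pfun x) (pfun y)) := by decide

theorem sq_ss : ∀ x : Q8, x * x = ss (cw (pfun x)) := by decide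

theorem ss_mul : ∀ d e f : ZMod 2, ss d * ss e * ss f = 1 ↔ d + e + f = 0 := by decide

theorem ss_or : ∀ d : ZMod 2, ss d = 1 ∨ ss d = QuaternionGroup.a 2 := by decide

def PP : (Fin 3 → Q8) →* Multiplicative VV where
  toFun x := Multiplicative.ofAdd fun i => pfun (x i)
  map_one' := by
    apply Multiplicative.toAdd.injective
    funext i
    exact (pfun_ker 1).2 (Or.inl rfl)
  map_mul' x y := by
    apply Multiplicative.toAdd.injective
    funext i
    exact pfun_mul _ _

theorem PP_ker (x : Fin 3 → Q8) :
    PP x = 1 ↔ ∀ l, x l = 1 ∨ x l = QuaternionGroup.a 2 := by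
  constructor
  · intro h l
    exact (pfun_ker _).1 (congrFun (congrArg Multiplicative.toAdd h) l)
  · intro h
    apply Multiplicative.toAdd.injective
    funext i
    exact (pfun_ker _).2 (h i)

def zvec : Fin 3 → Q8 := ![QuaternionGroup.a 2, 1, 1]

theorem sign_prod : ∀ p q r : Q8, (p = 1 ∨ p = QuaternionGroup.a 2) →
    (q = 1 ∨ q = QuaternionGroup.a 2) → (r = 1 ∨ r = QuaternionGroup.a 2) →
    p * q * r ≠ 1 → (p⁻¹ * QuaternionGroup.a 2 = 1 ∨ p⁻¹ * QuaternionGroup.a 2 = QuaternionGroup.a 2)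
      ∧ (q⁻¹ * 1 = 1 ∨ q⁻¹ * 1 = QuaternionGroup.a 2)
      ∧ (r⁻¹ * 1 = 1 ∨ r⁻¹ * 1 = QuaternionGroup.a 2)
      ∧ (p⁻¹ * QuaternionGroup.a 2) * (q⁻¹ * 1) * (r⁻¹ * 1) = 1 := by
  decide

end QQ

/-- every maximal abelian subgroup of `(Q₈ × Q₈ × Q₈)/K` is isomorphic
to `ℤ/2 × ℤ/2 × ℤ/4`.  Here `Q₈ = QuaternionGroup 2`, `-1 = QuaternionGroup.a 2`,
and `K = {(ε₁,ε₂,ε₃) : εₗ = ±1, ε₁ε₂ε₃ = 1}`. -/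
theorem stmt_2 (K : Subgroup (Fin 3 → QuaternionGroup 2)) [K.Normal]
    (hK : ∀ t, t ∈ K ↔
      ((∀ l, t l = 1 ∨ t l = QuaternionGroup.a 2) ∧ t 0 * t 1 * t 2 = 1))
    (H : Subgroup ((Fin 3 → QuaternionGroup 2) ⧸ K))
    (hH : IsMaximalAbelian H) :
    Nonempty (H ≃* Multiplicative (ZMod 2 × ZMod 2 × ZMod 4)) := by
  open QQ in
  have hle : K ≤ PP.ker := fun x hx => MonoidHom.mem_ker.2 ((PP_ker x).2 ((hK x).1 hx).1)
  open QQ in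
  refine abstract_main (QuotientGroup.lift K PP hle)
    ?_ (QuotientGroup.mk zvec) ?_ ?_ ?_ ?_ H hH
  · intro v
    choose f hf using pfun_surj
    refine ⟨QuotientGroup.mk fun i => f (v.toAdd i), ?_⟩
    rw [QuotientGroup.lift_mk]
    apply Multiplicative.toAdd.injective
    funext i
    exact hf _
  · rw [Ne, QuotientGroup.eq_one_iff, hK]
    rintro ⟨-, h⟩
    revert h
    decide
  · intro g
    obtain ⟨x, rfl⟩ := QuotientGroup.mk_surjective g
    rw [QuotientGroup.lift_mk, PP_ker, QuotientGroup.eq_one_iff, hK, QuotientGroup.eq, hK]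
    constructor
    · intro h
      by_cases h1 : x 0 * x 1 * x 2 = 1
      · exact Or.inl ⟨h, h1⟩
      · right
        obtain ⟨h2, h3, h4, h5⟩ := sign_prod _ _ _ (h 0) (h 1) (h 2) h1
        refine ⟨fun l => ?_, h5⟩
        fin_cases l
        · exact h2
        · exact h3
        · exact h4
    · rintro (h | h)
      · exact h.1
      · intro l
        have h1 := h.1 l
        have h2 : zvec l = 1 ∨ zvec l = QuaternionGroup.a 2 := by
          clear h1; revert l; decide
        rw [Pi.mul_apply, Pi.inv_apply] at h1
        have h3 : ∀ p q : Q8, (p⁻¹ * q = 1 ∨ p⁻¹ * q = QuaternionGroup.a 2) →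
          (q = 1 ∨ q = QuaternionGroup.a 2) → (p = 1 ∨ p = QuaternionGroup.a 2) := by decide
        exact h3 _ _ h1 h2
  · intro g h
    obtain ⟨x, rfl⟩ := QuotientGroup.mk_surjective g
    obtain ⟨y, rfl⟩ := QuotientGroup.mk_surjective h
    rw [QuotientGroup.lift_mk, QuotientGroup.lift_mk, eq_comm, ← QuotientGroup.mk_mul,
      ← QuotientGroup.mk_mul, QuotientGroup.eq, hK]
    have e : ∀ l, ((y * x)⁻¹ * (x * y)) l = ss (b2 (pfun (x l)) (pfun (y l))) :=
      fun l => comm_ss _ _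
    simp only [e, ss_mul]
    exact ⟨fun h => h.2, fun h => ⟨fun l => ss_or _, h⟩⟩
  · intro g
    obtain ⟨x, rfl⟩ := QuotientGroup.mk_surjective g
    rw [QuotientGroup.lift_mk, ← QuotientGroup.mk_mul, QuotientGroup.eq_one_iff, hK]
    have e : ∀ l, (x * x) l = ss (cw (pfun (x l))) := fun l => sq_ss _
    simp only [e, ss_mul]
    exact ⟨fun h => h.2, fun h => ⟨fun l => ss_or _, h⟩⟩
end

section
/- Let Q₈ denote the quaternion group {±1, ±i, ±j, ±k} of order 8, and let K be the subgroup of Q₈ × Q₈ × Q₈ consisting of the triples (ε₁, ε₂, ε₃) with each ε_l ∈ {1, −1} and ε₁ε₂ε₃ = 1. Set G = (Q₈ × Q₈ × Q₈)/K. If H is a maximal abelian subgroup of G, then there exists an automorphism ψ of G, lying in the subgroup of Aut(G) generated by the automorphisms induced by triples (φ₁, φ₂, φ₃) of automorphisms of Q₈ acting componentwise and by the automorphisms induced by permutations of the three factors Q₈, such that ψ(H) is one of the following subgroups of G: (a) ⟨i⟩³/K, the image of ⟨i⟩ × ⟨i⟩ × ⟨i⟩; (b) the image in G of the set {(x, x,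 y) : x ∈ Q₈, y ∈ ⟨i⟩}; (c) the subgroup of G generated by the images of (i,i,i), (j,j,i), and (i,j,j). -/
namespace QC

/-- symplectic form on the Klein four group `{0,1,2,3}` -/
def om (a b : Fin 4) : Bool := decide (a ≠ 0) && decide (b ≠ 0) && decide (a ≠ b)

def om3 (v w : Fin 3 → Fin 4) : Bool :=
  xor (xor (om (v 0) (w 0)) (om (v 1) (w 1))) (om (v 2) (w 2))

def ad (a b : Fin 4) : Fin 4 := a ^^^ b

def SD (P : (Fin 3 → Fin 4) → Prop) : Prop := ∀ v, P v ↔ ∀ w, P w → om3 v w = false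

theorem om_ad : ∀ a b c, om (ad a b) c = xor (om a c) (om b c) := by decide
theorem om_zero : ∀ c, om 0 c = false := by decide
theorem om_symm : ∀ a c, om a c = om c a := by decide
theorem om_perm (f : Equiv.Perm (Fin 4)) (hf : f 0 = 0) (a b : Fin 4) :
    om (f a) (f b) = om a b := by
  have h : ∀ x, f x = 0 ↔ x = 0 := fun x => by
    rw [← f.injective.eq_iff (a := x) (b := 0), hf]
  simp [om, h]

theorem xor_perm : ∀ (σ : Equiv.Perm (Fin 3)) (g : Fin 3 → Bool),
    xor (xor (g (σ 0)) (g (σ 1))) (g (σ 2)) = xor (xor (g 0) (g 1)) (g 2) := by decide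

theorem om3_g (σ : Equiv.Perm (Fin 3)) (f : Fin 3 → Equiv.Perm (Fin 4)) (hf : ∀ l, f l 0 = 0)
    (v w : Fin 3 → Fin 4) :
    om3 (fun l => f l (v (σ l))) (fun l => f l (w (σ l))) = om3 v w := by
  simp only [om3, om_perm _ (hf _)]
  exact xor_perm σ (fun l => om (v l) (w l))

def Wa (v : Fin 3 → Fin 4) : Prop := ∀ l, v l = 0 ∨ v l = 1
def Wb (v : Fin 3 → Fin 4) : Prop := v 0 = v 1 ∧ (v 2 = 0 ∨ v 2 = 1)
def Wc (v : Fin 3 → Fin 4) : Prop :=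
  om3 v ![1,1,1] = false ∧ om3 v ![2,2,1] = false ∧ om3 v ![1,2,2] = false

theorem Wa_iso (v w) (hv : Wa v) (hw : Wa w) : om3 v w = false := by
  have : ∀ a b : Fin 4, (a = 0 ∨ a = 1) → (b = 0 ∨ b = 1) → om a b = false := by decide
  simp [om3, this _ _ (hv _) (hw _)]

theorem Wb_iso (v w) (hv : Wb v) (hw : Wb w) : om3 v w = false := by
  have : ∀ a b : Fin 4, (a = 0 ∨ a = 1) → (b = 0 ∨ b = 1) → om a b = false := by decide
  simp [om3, this _ _ hv.2 hw.2, hv.1, hw.1]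

set_option maxRecDepth 100000 in
theorem Wc_cases : ∀ a b c : Fin 4, Wc ![a,b,c] →
    (a, b, c) ∈ [((0 : Fin 4), (0 : Fin 4), (0 : Fin 4)), (1,1,1), (2,2,1), (1,2,2), (3,3,0),
      (0,3,3), (3,0,3), (2,1,2)] := by
  unfold Wc; decide

theorem eta3 {α : Type*} (v : Fin 3 → α) : v = ![v 0, v 1, v 2] := by
  ext l; fin_cases l <;> rfl

set_option maxRecDepth 100000 in
theorem Wc_iso (v w) (hv : Wc v) (hw : Wc w) : om3 v w = false := by
  rw [eta3 v] at hv; rw [eta3 w] at hw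
  have h1 := Wc_cases _ _ _ hv
  have h2 := Wc_cases _ _ _ hw
  have : ∀ p ∈ [((0 : Fin 4), (0 : Fin 4), (0 : Fin 4)), (1,1,1), (2,2,1), (1,2,2), (3,3,0),
      (0,3,3), (3,0,3), (2,1,2)], ∀ q ∈ [((0 : Fin 4), (0 : Fin 4), (0 : Fin 4)), (1,1,1),
      (2,2,1), (1,2,2), (3,3,0), (0,3,3), (3,0,3), (2,1,2)],
      xor (xor (om p.1 q.1) (om p.2.1 q.2.1)) (om p.2.2 q.2.2) = false := by decide
  exact this _ h1 _ h2

/-- curried self-duality -/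
def SD' (P : Fin 4 → Fin 4 → Fin 4 → Prop) : Prop := ∀ a b c, P a b c ↔
  ∀ a' b' c', P a' b' c' → xor (xor (om a a') (om b b')) (om c c') = false

theorem SD'.add {P} (h : SD' P) {a b c a' b' c'} (h1 : P a b c) (h2 : P a' b' c') :
    P (ad a a') (ad b b') (ad c c') := by
  rw [h] at h1 h2 ⊢
  intro x y z hx
  have e1 := h1 _ _ _ hx
  have e2 := h2 _ _ _ hx
  simp only [om_ad]
  revert e1 e2
  generalize om a x = A, om b y = B, om c z = C, om a' x = A', om b' y = B', om c' z = C'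
  revert A B C A' B' C'; decide

theorem SD'.iso {P} (h : SD' P) {a b c a' b' c'} (h1 : P a b c) (h2 : P a' b' c') :
    xor (xor (om a a') (om b b')) (om c c') = false := (h _ _ _).1 h1 _ _ _ h2

theorem SD'.swap {P} (h : SD' P) : SD' (fun b a c => P a b c) := by
  intro b a c
  show P a b c ↔ _
  rw [h]
  constructor
  · intro k b' a' c' hp
    rw [Bool.xor_comm (om b b')]; exact k _ _ _ hp
  · intro k b' a' c' hp
    rw [Bool.xor_comm (om a b')]; exact k _ _ _ hp

/-- no weight-one vectors in the first slot: the projection is onto -/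
theorem SD'.onto {P} (h : SD' P) (h0 : ∀ z, z ≠ 0 → ¬ P z 0 0) (x : Fin 4) : ∃ b c, P x b c := by
  have key : ∀ z, z ≠ 0 → ∃ x b c, P x b c ∧ om z x = true := by
    intro z hz
    have := h0 z hz
    rw [h] at this
    push Not at this
    obtain ⟨x, b, c, hp, hx⟩ := this
    exact ⟨x, b, c, hp, by simpa [om_zero] using hx⟩
  obtain ⟨x1, b1, c1, p1, o1⟩ := key 1 (by decide)
  have hx1 : x1 ≠ 0 := by rintro rfl; simp [om] at o1
  obtain ⟨x2, b2, c2, p2, o2⟩ := key x1 hx1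
  have : ∀ x1 x2 x, om x1 x2 = true → x = ad x1 x1 ∨ x = x1 ∨ x = x2 ∨ x = ad x1 x2 := by decide
  rcases this x1 x2 x o2 with rfl | rfl | rfl | rfl
  · exact ⟨_, _, h.add p1 p1⟩
  · exact ⟨_, _, p1⟩
  · exact ⟨_, _, p2⟩
  · exact ⟨_, _, h.add p1 p2⟩

theorem SD'.kernel {P} (h : SD' P) (h0 : ∀ z, z ≠ 0 → ¬ P z 0 0) (h1 : ∀ z, z ≠ 0 → ¬ P 0 z 0)
    (h2 : ∀ z, z ≠ 0 → ¬ P 0 0 z) : ∃ a b, a ≠ 0 ∧ b ≠ 0 ∧ P 0 a b := by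
  by_contra hc
  push Not at hc
  have hc' : ∀ a b, P 0 a b → a = 0 ∧ b = 0 := by
    intro a b hp
    by_cases ha : a = 0
    · refine ⟨ha, ?_⟩
      by_contra hb; exact h2 b hb (ha ▸ hp)
    · by_cases hb : b = 0
      · exact absurd (hb ▸ hp) (h1 a ha)
      · exact absurd hp (hc a b ha hb)
  obtain ⟨v1, v2, pv⟩ := h.onto h0 1
  obtain ⟨w1, w2, pw⟩ := h.onto h0 2
  have adz : ∀ x y, ad x y = 0 → x = y := by decide
  have adzz : ad 0 0 = 0 := by decide
  have ads : ∀ x, ad x x = 0 := by decide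
  have uniq : ∀ x a b a' b', P x a b → P x a' b' → a = a' ∧ b = b' := by
    intro x a b a' b' p q
    have r := h.add p q
    rw [ads] at r
    exact ⟨adz _ _ (hc' _ _ r).1, adz _ _ (hc' _ _ r).2⟩
  have all : ∀ x a b, P x a b → (a = 0 ∧ b = 0) ∨ (a = v1 ∧ b = v2) ∨ (a = w1 ∧ b = w2) ∨
      (a = ad v1 w1 ∧ b = ad v2 w2) := by
    intro x a b p
    have : ∀ x : Fin 4, x = 0 ∨ x = 1 ∨ x = 2 ∨ x = ad 1 2 := by decide
    rcases this x with rfl | rfl | rfl | rfl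
    · exact Or.inl (hc' _ _ p)
    · exact Or.inr (Or.inl (uniq _ _ _ _ _ p pv))
    · exact Or.inr (Or.inr (Or.inl (uniq _ _ _ _ _ p pw)))
    · exact Or.inr (Or.inr (Or.inr (uniq _ _ _ _ _ p (h.add pv pw))))
  have dep : ∀ x y, om x y = false → ∃ z, z ≠ 0 ∧ om z x = false ∧ om z y = false ∧
      om z (ad x y) = false ∧ om z 0 = false := by decide
  have i1 : om v1 w1 = true := by
    by_contra hh
    obtain ⟨z, hz, z1, z2, z3, z4⟩ := dep v1 w1 (by simpa using hh)
    refine h1 z hz ((h _ _ _).2 fun a' b' c' hp => ?_)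
    simp only [om_zero]
    rcases all _ _ _ hp with ⟨rfl, _⟩ | ⟨rfl, _⟩ | ⟨rfl, _⟩ | ⟨rfl, _⟩ <;> simp [*]
  have i2 : om v2 w2 = true := by
    by_contra hh
    obtain ⟨z, hz, z1, z2, z3, z4⟩ := dep v2 w2 (by simpa using hh)
    refine h2 z hz ((h _ _ _).2 fun a' b' c' hp => ?_)
    simp only [om_zero]
    rcases all _ _ _ hp with ⟨_, rfl⟩ | ⟨_, rfl⟩ | ⟨_, rfl⟩ | ⟨_, rfl⟩ <;> simp [*]
  have := h.iso pv pw
  rw [i1, i2] at this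
  revert this; decide

theorem perm_b : ∀ b c, om b c = true → ∃ φ : Equiv.Perm (Fin 4), φ 0 = 0 ∧
    ∀ x y, om x 1 = om y b → om x 2 = om y c → φ y = x := by
  decide

theorem perm_c : ∀ c v, om v c = true → ∃ φ : Equiv.Perm (Fin 4), φ 0 = 0 ∧ φ c = 3 ∧ φ v = 1 := by
  decide

theorem perm_z : ∀ z : Fin 4, z ≠ 0 → ∃ φ : Equiv.Perm (Fin 4), φ 0 = 0 ∧
    ∀ x, om x z = false → (φ x = 0 ∨ φ x = 1) := by decide

set_option maxRecDepth 100000 in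
theorem fin_c : ∀ x y z, om y 3 = om x 3 ∧ om z 3 = om x 3 →
    xor (xor (om x 1) (om y 1)) (om z 1) = false → Wc ![x,y,z] := by
  unfold Wc; decide

theorem SD.curry {P} (h : SD P) (σ : Equiv.Perm (Fin 3)) :
    SD' (fun a b c => P (fun l => ![a,b,c] (σ.symm l))) := by
  intro a b c
  show P _ ↔ _
  rw [h]
  constructor
  · intro k a' b' c' hp
    have := k _ hp
    have e := xor_perm σ.symm (fun l => om (![a,b,c] l) (![a',b',c'] l))
    exact e.symm.trans this
  · intro k w hw
    have e := xor_perm σ (fun l => om (![a,b,c] (σ.symm l)) (w l))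
    refine e.symm.trans ?_
    simp only [Equiv.symm_apply_apply]
    refine k _ _ _ ?_
    convert hw using 2 with l
    rw [← eta3 (fun l => w (σ l))]
    simp

theorem uncurry {P : (Fin 3 → Fin 4) → Prop} (σ : Equiv.Perm (Fin 3)) {v} (hv : P v) :
    P (fun l => ![v (σ 0), v (σ 1), v (σ 2)] (σ.symm l)) := by
  rw [← eta3 (fun l => v (σ l))]
  simpa using hv

def Img (P : (Fin 3 → Fin 4) → Prop) (W : (Fin 3 → Fin 4) → Prop) : Prop :=
  ∃ (σ : Equiv.Perm (Fin 3)) (f : Fin 3 → Equiv.Perm (Fin 4)), (∀ l, f l 0 = 0) ∧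
    ∀ v, P v ↔ W (fun l => f l (v (σ l)))

theorem img_of {P W} (h : SD P) (hW : ∀ v w, W v → W w → om3 v w = false)
    (σ : Equiv.Perm (Fin 3)) (f : Fin 3 → Equiv.Perm (Fin 4)) (hf : ∀ l, f l 0 = 0)
    (k : ∀ v, P v → W (fun l => f l (v (σ l)))) : Img P W := by
  refine ⟨σ, f, hf, fun v => ⟨k v, fun hv => (h v).2 fun w hw => ?_⟩⟩
  rw [← om3_g σ f hf]
  exact hW _ _ hv (k w hw)

theorem core {P} (h : SD P) : Img P Wa ∨ Img P Wb ∨ Img P Wc := by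
  by_cases hA : ∀ l, ∃ z, z ≠ 0 ∧ P (Pi.single l z)
  · left
    choose z hz hp using hA
    choose f hf0 hf using fun l => perm_z (z l) (hz l)
    refine img_of h Wa_iso 1 f hf0 fun v hv l => hf l _ ?_
    have := (h v).1 hv _ (hp l)
    have oz : ∀ x, om x 0 = false := by decide
    fin_cases l <;> simpa [om3, oz] using this
  right
  push Not at hA
  obtain ⟨m, hm⟩ := hA
  have sing : ∀ (σ : Equiv.Perm (Fin 3)) (k : Fin 3) (z : Fin 4),
      (fun l => (Pi.single k z : Fin 3 → Fin 4) (σ.symm l)) = Pi.single (σ k) z := by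
    intro σ k z
    ext l
    simp only [Pi.single_apply, Equiv.symm_apply_eq]
  have s0 : ∀ z : Fin 4, ![z, 0, 0] = Pi.single 0 z := by decide
  have s1 : ∀ z : Fin 4, ![0, z, 0] = Pi.single 1 z := by decide
  have s2 : ∀ z : Fin 4, ![0, 0, z] = Pi.single 2 z := by decide
  by_cases hB : ∃ l z, z ≠ 0 ∧ P (Pi.single l z)
  · left
    obtain ⟨l, z, hz, hp⟩ := hB
    have hml : m ≠ l := by rintro rfl; exact hm z hz hp
    have : ∀ m l : Fin 3, m ≠ l → ∃ σ : Equiv.Perm (Fin 3), σ 0 = m ∧ σ 2 = l := by decide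
    obtain ⟨σ, rfl, rfl⟩ := this m l hml
    have hc := h.curry σ
    have h0 : ∀ z, z ≠ 0 → ¬ (fun a b c => P (fun l => ![a,b,c] (σ.symm l))) z 0 0 := by
      intro z hz hh
      simp only [s0, sing] at hh
      exact hm z hz hh
    have h2 : (fun a b c => P (fun l => ![a,b,c] (σ.symm l))) 0 0 z := by
      simp only [s2, sing]; exact hp
    obtain ⟨b, t, p1⟩ := hc.onto h0 1
    obtain ⟨c, u, p2⟩ := hc.onto h0 2
    have q : ∀ {a b c}, (fun a b c => P (fun l => ![a,b,c] (σ.symm l))) a b c → om c z = false := by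
      intro a b c hh
      have oz : ∀ x, om x 0 = false := by decide
      simpa [oz] using hc.iso hh h2
    have oo : ∀ z t u, z ≠ 0 → om t z = false → om u z = false → om t u = false := by decide
    have hbc : om b c = true := by
      have e := hc.iso p1 p2
      rw [oo z t u hz (q p1) (q p2)] at e
      have : om 1 2 = true := by decide
      simpa [this] using e
    obtain ⟨φ, φ0, hφ⟩ := perm_b b c hbc
    obtain ⟨g, g0, hg⟩ := perm_z z hz
    refine img_of h Wb_iso σ ![1, φ, g] ?_ ?_
    · intro l; fin_cases l
      · rfl
      · exact φ0
      · exact g0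
    · intro v hv
      have hv' := uncurry (P := P) σ hv
      have hv2 := q hv'
      refine ⟨?_, hg _ hv2⟩
      symm
      apply hφ
      · have e := hc.iso hv' p1
        rw [oo z _ t hz hv2 (q p1)] at e
        simpa using e
      · have e := hc.iso hv' p2
        rw [oo z _ u hz hv2 (q p2)] at e
        simpa using e
  · right
    push Not at hB
    have hc := h.curry 1
    set Q : Fin 4 → Fin 4 → Fin 4 → Prop :=
      fun a b c => P (fun l => ![a,b,c] ((1 : Equiv.Perm (Fin 3)).symm l)) with hQ
    have n0 : ∀ z, z ≠ 0 → ¬ Q z 0 0 := by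
      intro z hz hh
      simp only [hQ, s0, sing] at hh
      exact hB _ z hz hh
    have n1 : ∀ z, z ≠ 0 → ¬ Q 0 z 0 := by
      intro z hz hh
      simp only [hQ, s1, sing] at hh
      exact hB _ z hz hh
    have n2 : ∀ z, z ≠ 0 → ¬ Q 0 0 z := by
      intro z hz hh
      simp only [hQ, s2, sing] at hh
      exact hB _ z hz hh
    obtain ⟨a, b, ha, hb, p⟩ := hc.kernel n0 n1 n2
    obtain ⟨c, d, hcz, hd, p'⟩ := hc.swap.kernel n1 n0 n2
    have p' : Q c 0 d := p'
    have hbd : b = d := by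
      have e := hc.iso p p'
      have : ∀ a b c d, b ≠ 0 → d ≠ 0 →
        xor (xor (om 0 c) (om a 0)) (om b d) = false → b = d := by decide
      exact this _ _ _ _ hb hd e
    subst hbd
    have : ∃ v0, om v0 c = true := by
      have : ∀ c, c ≠ 0 → ∃ v0, om v0 c = true := by decide
      exact this c hcz
    obtain ⟨v0, hv0⟩ := this
    obtain ⟨v1, v2, pv⟩ := hc.onto n0 v0
    have oz : ∀ x, om x 0 = false := by decide
    have r : ∀ {x y w}, Q x y w → om y a = om x c ∧ om w b = om x c := by
      intro x y w hq
      have e1 := hc.iso hq p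
      have e2 := hc.iso hq p'
      simp [oz] at e1 e2
      rw [e1, e2]; simp
    have hv1 := (r pv).1.trans hv0
    have hv2 := (r pv).2.trans hv0
    obtain ⟨f0, f00, f0c, f0v⟩ := perm_c _ _ hv0
    obtain ⟨f1, f10, f1c, f1v⟩ := perm_c _ _ hv1
    obtain ⟨f2, f20, f2c, f2v⟩ := perm_c _ _ hv2
    refine img_of h Wc_iso 1 ![f0, f1, f2] ?_ ?_
    · intro l; fin_cases l
      · exact f00
      · exact f10
      · exact f20
    · intro v hv
      have hv' : Q _ _ _ := uncurry (P := P) 1 hv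
      have r' := r hv'
      have e := hc.iso hv' pv
      rw [← om_perm f0 f00 _ v0, ← om_perm f1 f10 _ v1, ← om_perm f2 f20 _ v2, f0v, f1v, f2v] at e
      rw [← om_perm f1 f10 _ a, ← om_perm f0 f00 _ c, ← om_perm f2 f20 _ b, f0c, f1c, f2c] at r'
      have fin : ∀ x y z, om y 3 = om x 3 ∧ om z 3 = om x 3 →
        xor (xor (om x 1) (om y 1)) (om z 1) = false → Wc ![x,y,z] := by
        exact fin_c
      have := fin _ _ _ r' e
      rw [eta3 (fun l => _)]
      exact this


abbrev Q := QuaternionGroup 2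

def cl : Q → Fin 4
  | .a i => (![0,1,0,1] : Fin 4 → Fin 4) i
  | .xa i => (![2,3,2,3] : Fin 4 → Fin 4) i

theorem cl_comm : ∀ x y : Q, (x * y)⁻¹ * (y * x) =
    if om (cl x) (cl y) then QuaternionGroup.a 2 else 1 := by decide +kernel

theorem cl_eq : ∀ x y : Q, cl x = cl y ↔ (x⁻¹ * y = 1 ∨ x⁻¹ * y = QuaternionGroup.a 2) := by
  decide +kernel

theorem cl_surj : ∀ v : Fin 4, ∃ x, cl x = v := by decide +kernel

theorem cl_zpow (x : Q) : x ∈ Subgroup.zpowers (QuaternionGroup.a 1 : Q) ↔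
    (cl x = 0 ∨ cl x = 1) := by
  constructor
  · rintro ⟨n, rfl⟩
    have h4 : (QuaternionGroup.a 1 : Q) ^ (4 : ℤ) = 1 := by decide +kernel
    have : ∀ k : Fin 4, cl ((QuaternionGroup.a 1 : Q) ^ (k : ℕ)) = 0 ∨
      cl ((QuaternionGroup.a 1 : Q) ^ (k : ℕ)) = 1 := by decide +kernel
    have e : (QuaternionGroup.a 1 : Q) ^ n = (QuaternionGroup.a 1 : Q) ^ (n % 4).toNat := by
      rw [← zpow_natCast, Int.toNat_of_nonneg (Int.emod_nonneg _ (by norm_num))]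
      conv_lhs => rw [← Int.emod_add_mul_ediv n 4, zpow_add, zpow_mul, h4, one_zpow, mul_one]
    simp only [e]
    exact this ⟨(n % 4).toNat, by omega⟩
  · have : ∀ x : Q, (cl x = 0 ∨ cl x = 1) →
      ∃ k : Fin 4, (QuaternionGroup.a 1 : Q) ^ (k : ℕ) = x := by decide +kernel
    intro h
    obtain ⟨k, hk⟩ := this x h
    exact ⟨(k : ℕ), by simpa using hk⟩

/-- the map sending `i ↦ p`, `j ↦ q` -/
def F (p q : Q) : Q → Q
  | .a i => p ^ (show Fin 4 from i).val
  | .xa i => q * p ^ (show Fin 4 from i).val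

def rep : Fin 4 → Q
  | 0 => 1
  | 1 => .a 1
  | 2 => .xa 0
  | 3 => .xa 1

theorem F_mul : ∀ u v, om u v = true → ∀ x y,
    F (rep u) (rep v) (x * y) = F (rep u) (rep v) x * F (rep u) (rep v) y := by decide +kernel

theorem F_inj : ∀ u v, om u v = true → ∀ x y,
    F (rep u) (rep v) x = F (rep u) (rep v) y → x = y := by decide +kernel

theorem F_cl : ∀ u v, om u v = true → ∀ x, 
    cl (F (rep u) (rep v) x) = ![0, u, v, ad u v] (cl x) := by decide +kernel

theorem exists_aut (f : Equiv.Perm (Fin 4)) (hf : f 0 = 0) :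
    ∃ φ : MulAut Q, ∀ x, cl (φ x) = f (cl x) := by
  have h : om (f 1) (f 2) = true := by rw [om_perm f hf]; decide
  let g : Q →* Q := MonoidHom.mk' (F (rep (f 1)) (rep (f 2))) (F_mul _ _ h)
  have hg : Function.Injective g := F_inj _ _ h
  refine ⟨MulEquiv.ofBijective g (Finite.injective_iff_bijective.1 hg), fun x => ?_⟩
  have e : cl (MulEquiv.ofBijective g (Finite.injective_iff_bijective.1 hg) x) = _ := F_cl _ _ h x
  rw [e]
  have h3 : f 3 = ad (f 1) (f 2) := by
    have : ∀ f : Equiv.Perm (Fin 4), f 0 = 0 → f 3 = ad (f 1) (f 2) := by decide +kernel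
    exact this f hf
  generalize cl x = y
  fin_cases y
  · exact hf.symm
  · rfl
  · rfl
  · exact h3.symm

theorem aut_neg (φ : MulAut Q) (x : Q) :
    (φ x = 1 ∨ φ x = QuaternionGroup.a 2) ↔ (x = 1 ∨ x = QuaternionGroup.a 2) := by
  have h : ∀ x : Q, (x = 1 ∨ x = QuaternionGroup.a 2) ↔ x * x = 1 := by decide +kernel
  rw [h, h, ← map_mul, map_eq_one_iff φ φ.injective]

theorem aut_eq (φ : MulAut Q) (x : Q) (hx : x = 1 ∨ x = QuaternionGroup.a 2) : φ x = x := by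
  rcases hx with rfl | rfl
  · exact map_one φ
  · rcases (aut_neg φ (QuaternionGroup.a 2)).2 (Or.inr rfl) with h | h
    · rw [map_eq_one_iff φ φ.injective] at h; exact absurd h (by decide)
    · exact h

section
variable (K : Subgroup (Fin 3 → Q))

def IsK : Prop := ∀ t, t ∈ K ↔
      ((∀ l, t l = 1 ∨ t l = QuaternionGroup.a 2) ∧ t 0 * t 1 * t 2 = 1)

variable {K}

theorem mk_cl [K.Normal] (hK : IsK K) {s t : Fin 3 → Q}
    (h : QuotientGroup.mk' K s = QuotientGroup.mk' K t) (l : Fin 3) : cl (s l) = cl (t l) := by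
  have := (hK _).1 (QuotientGroup.eq.1 h)
  exact (cl_eq _ _).2 (this.1 l)

theorem mk_comm [K.Normal] (hK : IsK K) (s t : Fin 3 → Q) :
    QuotientGroup.mk' K s * QuotientGroup.mk' K t = QuotientGroup.mk' K t * QuotientGroup.mk' K s
    ↔ om3 (fun l => cl (s l)) (fun l => cl (t l)) = false := by
  rw [← map_mul, ← map_mul]
  refine QuotientGroup.eq.trans ?_
  rw [hK]
  simp only [Pi.mul_apply, Pi.inv_apply, cl_comm, om3]
  generalize om (cl (s 0)) (cl (t 0)) = A, om (cl (s 1)) (cl (t 1)) = B,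
    om (cl (s 2)) (cl (t 2)) = C
  have : ∀ A B C : Bool, ((if A then (QuaternionGroup.a 2 : Q) else 1) *
    (if B then QuaternionGroup.a 2 else 1) * (if C then QuaternionGroup.a 2 else 1) = 1) ↔
    xor (xor A B) C = false := by decide +kernel
  rw [← this]
  refine ⟨fun h => h.2, fun h => ⟨fun l => ?_, h⟩⟩
  split_ifs <;> simp

theorem mem_of_comm {G : Type*} [Group G] {H : Subgroup G} (hH : IsMaximalAbelian H) (g : G)
    (hg : ∀ h ∈ H, g * h = h * g) : g ∈ H := by
  have hc : ∀ x ∈ H, ∀ y ∈ H, x * y = y * x := by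
    intro x hx y hy
    have := hH.1.1.1 ⟨x, hx⟩ ⟨y, hy⟩
    exact congrArg Subtype.val this
  have key : IsMulCommutative (Subgroup.closure (insert g (H : Set G))) := by
    apply Subgroup.isMulCommutative_closure
    rintro x (rfl | hx) y (rfl | hy)
    · rfl
    · exact hg y hy
    · exact (hg x hx).symm
    · exact hc x hx y hy
  have := hH.2 _ key (fun x hx => Subgroup.subset_closure (Or.inr hx))
  rw [← this]
  exact Subgroup.subset_closure (Or.inl rfl)

theorem exists_SD [K.Normal] (hK : IsK K) {H : Subgroup ((Fin 3 → Q) ⧸ K)}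
    (hH : IsMaximalAbelian H) : ∃ P, SD P ∧
      ∀ t, QuotientGroup.mk' K t ∈ H ↔ P (fun l => cl (t l)) := by
  have hc : ∀ x ∈ H, ∀ y ∈ H, x * y = y * x := by
    intro x hx y hy
    have := hH.1.1.1 ⟨x, hx⟩ ⟨y, hy⟩
    exact congrArg Subtype.val this
  have mem : ∀ t, (∀ s, QuotientGroup.mk' K s ∈ H →
      om3 (fun l => cl (t l)) (fun l => cl (s l)) = false) → QuotientGroup.mk' K t ∈ H := by
    intro t ht
    apply mem_of_comm hH
    intro h hh
    obtain ⟨s, rfl⟩ := QuotientGroup.mk'_surjective K h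
    exact (mk_comm hK t s).2 (ht s hh)
  refine ⟨fun v => ∃ t, (fun l => cl (t l)) = v ∧ QuotientGroup.mk' K t ∈ H, ?_, ?_⟩
  · intro v
    constructor
    · rintro ⟨t, rfl, ht⟩ w ⟨s, rfl, hs⟩
      exact (mk_comm hK t s).1 (hc _ ht _ hs)
    · intro h
      choose t ht using fun l => cl_surj (v l)
      refine ⟨t, funext ht, mem t fun s hs => ?_⟩
      simp only [ht]
      exact h _ ⟨s, rfl, hs⟩
  · intro t
    refine ⟨fun h => ⟨t, rfl, h⟩, ?_⟩
    rintro ⟨s, hs, hsH⟩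
    refine mem t fun r hr => ?_
    rw [← hs]
    exact (mk_comm hK s r).1 (hc _ hsH _ hr)

theorem K_comm (t : Fin 3 → Q) : (∀ l, t l = 1 ∨ t l = QuaternionGroup.a 2) →
    ∀ σ : Equiv.Perm (Fin 3), t (σ 0) * t (σ 1) * t (σ 2) = t 0 * t 1 * t 2 := by
  intro h σ
  have : ∃ b : Fin 3 → Bool, t = fun l => if b l then QuaternionGroup.a 2 else 1 := by
    refine ⟨fun l => decide (t l = QuaternionGroup.a 2), funext fun l => ?_⟩
    rcases h l with e | e <;> simp [e]
  obtain ⟨b, rfl⟩ := this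
  revert b σ
  decide +kernel

theorem aut_of [K.Normal] (e : (Fin 3 → Q) ≃* (Fin 3 → Q))
    (he : ∀ t, e t ∈ K ↔ t ∈ K) :
    ∃ ψ : MulAut ((Fin 3 → Q) ⧸ K), ∀ t, ψ (QuotientGroup.mk' K t) = QuotientGroup.mk' K (e t) := by
  refine ⟨QuotientGroup.congr K K e ?_, fun t => rfl⟩
  ext t
  constructor
  · rintro ⟨s, hs, rfl⟩
    exact (he s).2 hs
  · intro ht
    exact ⟨e.symm t, (he _).1 (by simpa using ht), by simp⟩

theorem aut_phi (hK : IsK K) [K.Normal] (φ : Fin 3 → MulAut Q) :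
    ∃ ψ : MulAut ((Fin 3 → Q) ⧸ K), ∀ t, ψ (QuotientGroup.mk' K t) =
      QuotientGroup.mk' K (fun l => φ l (t l)) := by
  refine aut_of (MulEquiv.piCongrRight φ) fun t => ?_
  rw [hK, hK]
  simp only [MulEquiv.piCongrRight_apply, aut_neg]
  refine and_congr_right fun h => ?_
  rw [aut_eq _ _ (h 0), aut_eq _ _ (h 1), aut_eq _ _ (h 2)]

theorem aut_sigma (hK : IsK K) [K.Normal] (σ : Equiv.Perm (Fin 3)) :
    ∃ ψ : MulAut ((Fin 3 → Q) ⧸ K), ∀ t, ψ (QuotientGroup.mk' K t) =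
      QuotientGroup.mk' K (fun l => t (σ l)) := by
  let e : (Fin 3 → Q) ≃* (Fin 3 → Q) :=
    { toFun := fun t l => t (σ l)
      invFun := fun t l => t (σ.symm l)
      left_inv := fun t => by simp
      right_inv := fun t => by simp
      map_mul' := fun _ _ => rfl }
  refine aut_of e fun t => ?_
  rw [hK, hK]
  show ((∀ l, t (σ l) = 1 ∨ t (σ l) = _) ∧ t (σ 0) * t (σ 1) * t (σ 2) = 1) ↔ _
  rw [σ.forall_congr_left (p := fun l => t (σ l) = 1 ∨ t (σ l) = QuaternionGroup.a 2)]
  simp only [Equiv.apply_symm_apply]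
  refine and_congr_right fun h => ?_
  rw [K_comm t h]

theorem target_a [K.Normal] (hK : IsK K) (t : Fin 3 → Q) :
    QuotientGroup.mk' K t ∈ Subgroup.map (QuotientGroup.mk' K)
            (Subgroup.pi Set.univ fun _ => Subgroup.zpowers (QuaternionGroup.a 1)) ↔
    Wa (fun l => cl (t l)) := by
  constructor
  · rintro ⟨s, hs, e⟩ l
    have := (cl_zpow (s l)).1 (hs l (Set.mem_univ _))
    rwa [mk_cl hK e l] at this
  · intro h
    exact ⟨t, fun l _ => (cl_zpow _).2 (h l), rfl⟩

theorem target_b [K.Normal] (hK : IsK K) (t : Fin 3 → Q) :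
    QuotientGroup.mk' K t ∈ (QuotientGroup.mk' K) ''
            {t : Fin 3 → Q | t 0 = t 1 ∧ t 2 ∈ Subgroup.zpowers (QuaternionGroup.a 1)} ↔
    Wb (fun l => cl (t l)) := by
  constructor
  · rintro ⟨s, ⟨h1, h2⟩, e⟩
    rw [cl_zpow] at h2
    refine ⟨?_, ?_⟩
    · show cl (t 0) = cl (t 1)
      rw [← mk_cl hK e, ← mk_cl hK e, h1]
    · rwa [mk_cl hK e] at h2
  · rintro ⟨h1, h2⟩
    change cl (t 0) = cl (t 1) at h1
    have h1' := (cl_eq _ _).1 h1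
    refine ⟨![t 0, t 0, ((t 0)⁻¹ * t 1)⁻¹ * t 2], ⟨rfl, ?_⟩, ?_⟩
    · show ((t 0)⁻¹ * t 1)⁻¹ * t 2 ∈ _
      rw [cl_zpow]
      have : ∀ y z : Q, (y = 1 ∨ y = QuaternionGroup.a 2) → cl (y⁻¹ * z) = cl z := by
        decide +kernel
      rwa [this _ _ h1']
    · refine QuotientGroup.eq.2 ((hK _).2 ?_)
      generalize hy : (t 0)⁻¹ * t 1 = y at *
      have hc : ∀ y z : Q, (y = 1 ∨ y = QuaternionGroup.a 2) → (y⁻¹ * z)⁻¹ * z = y := by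
        decide +kernel
      have e0 : (![t 0, t 0, y⁻¹ * t 2]⁻¹ * t) 0 = 1 := by simp
      have e1 : (![t 0, t 0, y⁻¹ * t 2]⁻¹ * t) 1 = y := by simpa using hy
      have e2 : (![t 0, t 0, y⁻¹ * t 2]⁻¹ * t) 2 = y := hc _ _ h1'
      refine ⟨fun l => ?_, ?_⟩
      · fin_cases l
        · exact Or.inl e0
        · exact h1'.imp (fun h => e1.trans h) (fun h => e1.trans h)
        · exact h1'.imp (fun h => e2.trans h) (fun h => e2.trans h)
      · rw [e0, e1, e2]
        rcases h1' with rfl | rfl <;> decide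

theorem target_c [K.Normal] (hK : IsK K) (t : Fin 3 → Q) :
    QuotientGroup.mk' K t ∈ Subgroup.closure
            {QuotientGroup.mk' K
                ![QuaternionGroup.a 1, QuaternionGroup.a 1, QuaternionGroup.a 1],
             QuotientGroup.mk' K
                ![QuaternionGroup.xa 0, QuaternionGroup.xa 0, QuaternionGroup.a 1],
             QuotientGroup.mk' K
                ![QuaternionGroup.a 1, QuaternionGroup.xa 0, QuaternionGroup.xa 0]} ↔
    Wc (fun l => cl (t l)) := by
  set g1 : Fin 3 → Q := ![QuaternionGroup.a 1, QuaternionGroup.a 1, QuaternionGroup.a 1] with hg1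
  set g2 : Fin 3 → Q := ![QuaternionGroup.xa 0, QuaternionGroup.xa 0, QuaternionGroup.a 1] with hg2
  set g3 : Fin 3 → Q := ![QuaternionGroup.a 1, QuaternionGroup.xa 0, QuaternionGroup.xa 0] with hg3
  set S : Set ((Fin 3 → Q) ⧸ K) := {QuotientGroup.mk' K g1, QuotientGroup.mk' K g2,
    QuotientGroup.mk' K g3} with hS
  have c1 : (fun l => cl (g1 l)) = ![1,1,1] := by decide +kernel
  have c2 : (fun l => cl (g2 l)) = ![2,2,1] := by decide +kernel
  have c3 : (fun l => cl (g3 l)) = ![1,2,2] := by decide +kernel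
  have cent : ∀ s, QuotientGroup.mk' K s ∈ Subgroup.centralizer S ↔ Wc (fun l => cl (s l)) := by
    intro s
    rw [Subgroup.mem_centralizer_iff]
    simp only [hS, Set.mem_insert_iff, Set.mem_singleton_iff, forall_eq_or_imp, forall_eq]
    rw [eq_comm, mk_comm hK, eq_comm (a := QuotientGroup.mk' K g2 * _), mk_comm hK,
      eq_comm (a := QuotientGroup.mk' K g3 * _), mk_comm hK, c1, c2, c3]
    rfl
  constructor
  · intro h
    rw [← cent]
    refine (Subgroup.closure_le _).2 ?_ h
    rintro x (rfl | rfl | rfl)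
    · refine (cent _).2 ?_
      rw [c1]; unfold Wc; decide
    · refine (cent _).2 ?_
      rw [c2]; unfold Wc; decide
    · refine (cent _).2 ?_
      rw [c3]; unfold Wc; decide
  · intro h
    have m1 : QuotientGroup.mk' K g1 ∈ Subgroup.closure S :=
      Subgroup.subset_closure (Or.inl rfl)
    have m2 : QuotientGroup.mk' K g2 ∈ Subgroup.closure S :=
      Subgroup.subset_closure (Or.inr (Or.inl rfl))
    have m3 : QuotientGroup.mk' K g3 ∈ Subgroup.closure S :=
      Subgroup.subset_closure (Or.inr (Or.inr rfl))
    -- reduction to a representative of the class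
    have red : ∀ s, QuotientGroup.mk' K s ∈ Subgroup.closure S →
        (∀ l, cl (s l) = cl (t l)) → QuotientGroup.mk' K t ∈ Subgroup.closure S := by
      intro s hs e
      have hz : ∀ l, (s⁻¹ * t) l = 1 ∨ (s⁻¹ * t) l = QuaternionGroup.a 2 :=
        fun l => (cl_eq _ _).1 (e l)
      have hz' : QuotientGroup.mk' K (s⁻¹ * t) ∈ Subgroup.closure S := by
        generalize s⁻¹ * t = z at hz
        by_cases hp : z 0 * z 1 * z 2 = 1
        · have : QuotientGroup.mk' K z = 1 := (QuotientGroup.eq_one_iff z).2 ((hK z).2 ⟨hz, hp⟩)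
          rw [this]; exact one_mem _
        · have : QuotientGroup.mk' K z = QuotientGroup.mk' K (g1 * g1) := by
            refine QuotientGroup.eq.2 ((hK _).2 ?_)
            have A : ∀ x : Q, (x = 1 ∨ x = QuaternionGroup.a 2) →
              (x⁻¹ * (QuaternionGroup.a 1 * QuaternionGroup.a 1) = 1 ∨
              x⁻¹ * (QuaternionGroup.a 1 * QuaternionGroup.a 1) = QuaternionGroup.a 2) := by
              decide +kernel
            have B : ∀ x : Q, (x = 1 ∨ x = QuaternionGroup.a 2) →
              ∀ y : Q, (y = 1 ∨ y = QuaternionGroup.a 2) →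
              ∀ z : Q, (z = 1 ∨ z = QuaternionGroup.a 2) → x * y * z ≠ 1 →
              (x⁻¹ * (QuaternionGroup.a 1 * QuaternionGroup.a 1)) *
              (y⁻¹ * (QuaternionGroup.a 1 * QuaternionGroup.a 1)) *
              (z⁻¹ * (QuaternionGroup.a 1 * QuaternionGroup.a 1)) = 1 := by
              decide +kernel
            refine ⟨fun l => ?_, B _ (hz 0) _ (hz 1) _ (hz 2) hp⟩
            fin_cases l
            · exact A _ (hz 0)
            · exact A _ (hz 1)
            · exact A _ (hz 2)
          rw [this, map_mul]; exact mul_mem m1 m1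
      have := mul_mem hs hz'
      rwa [← map_mul, mul_inv_cancel_left] at this
    rw [eta3 (fun l => cl (t l))] at h
    have hc := Wc_cases _ _ _ h
    simp only [List.mem_cons, Prod.mk.injEq, List.not_mem_nil, or_false] at hc
    have go : ∀ s, QuotientGroup.mk' K s ∈ Subgroup.closure S →
        cl (t 0) = cl (s 0) ∧ cl (t 1) = cl (s 1) ∧ cl (t 2) = cl (s 2) →
        QuotientGroup.mk' K t ∈ Subgroup.closure S := by
      intro s hs e
      refine red s hs fun l => ?_
      fin_cases l
      · exact e.1.symm
      · exact e.2.1.symm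
      · exact e.2.2.symm
    have mm : ∀ s s', QuotientGroup.mk' K s ∈ Subgroup.closure S →
        QuotientGroup.mk' K s' ∈ Subgroup.closure S →
        QuotientGroup.mk' K (s * s') ∈ Subgroup.closure S := by
      intro s s' h h'
      rw [map_mul]; exact mul_mem h h'
    rcases hc with hc | hc | hc | hc | hc | hc | hc | hc
    · exact go (g1 * g1) (mm _ _ m1 m1) hc
    · exact go g1 m1 hc
    · exact go g2 m2 hc
    · exact go g3 m3 hc
    · exact go (g1 * g2) (mm _ _ m1 m2) hc
    · exact go (g1 * g3) (mm _ _ m1 m3) hc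
    · exact go (g2 * g3) (mm _ _ m2 m3) hc
    · exact go (g1 * g2 * g3) (mm _ _ (mm _ _ m1 m2) m3) hc

theorem transport [K.Normal] (hK : IsK K) {H : Subgroup ((Fin 3 → Q) ⧸ K)} {P W}
    (hP : ∀ t, QuotientGroup.mk' K t ∈ H ↔ P (fun l => cl (t l))) (hI : Img P W) :
    ∃ ψ : MulAut ((Fin 3 → Q) ⧸ K),
      ψ ∈ Subgroup.closure {ψ' : MulAut ((Fin 3 → Q) ⧸ K) |
        (∃ φ : Fin 3 → MulAut Q,
          ∀ t, ψ' (QuotientGroup.mk' K t) = QuotientGroup.mk' K (fun l => φ l (t l))) ∨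
        (∃ σ : Equiv.Perm (Fin 3),
          ∀ t, ψ' (QuotientGroup.mk' K t) = QuotientGroup.mk' K (fun l => t (σ l)))} ∧
      ∀ s, QuotientGroup.mk' K s ∈ Subgroup.map ψ.toMonoidHom H ↔ W (fun l => cl (s l)) := by
  obtain ⟨σ, f, hf, hPW⟩ := hI
  choose φ hφ using fun l => exists_aut (f l) (hf l)
  obtain ⟨ψ1, h1⟩ := aut_phi hK φ
  obtain ⟨ψ2, h2⟩ := aut_sigma hK σ
  have h12 : ∀ t, (ψ1 * ψ2) (QuotientGroup.mk' K t) =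
      QuotientGroup.mk' K (fun l => φ l (t (σ l))) := by
    intro t
    rw [MulAut.mul_apply, h2, h1]
  refine ⟨ψ1 * ψ2, mul_mem (Subgroup.subset_closure (Or.inl ⟨φ, h1⟩))
    (Subgroup.subset_closure (Or.inr ⟨σ, h2⟩)), fun s => ?_⟩
  have hs : ∃ t : Fin 3 → Q, s = fun l => φ l (t (σ l)) :=
    ⟨fun l => (φ (σ.symm l)).symm (s (σ.symm l)), by ext l; simp⟩
  obtain ⟨t, rfl⟩ := hs
  simp only [hφ]
  rw [← hPW (fun l => cl (t l)), ← hP, ← h12]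
  exact Subgroup.mem_map_iff_mem (f := (ψ1 * ψ2).toMonoidHom) (ψ1 * ψ2).injective

end

end QC

/-- any maximal abelian subgroup of `G = (Q₈ × Q₈ × Q₈)/K` can be moved,
by an automorphism of `G` lying in the subgroup of `Aut G` generated by those
automorphisms induced by triples of automorphisms of `Q₈` acting componentwise and
those induced by permutations of the three factors, onto one of three explicit
subgroups.  Here `Q₈ = QuaternionGroup 2`, `i = QuaternionGroup.a 1`,
`j = QuaternionGroup.xa 0`, `-1 = QuaternionGroup.a 2`. -/
theorem stmt_3 (K : Subgroup (Fin 3 → QuaternionGroup 2)) [K.Normal]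
    (hK : ∀ t, t ∈ K ↔
      ((∀ l, t l = 1 ∨ t l = QuaternionGroup.a 2) ∧ t 0 * t 1 * t 2 = 1))
    (H : Subgroup ((Fin 3 → QuaternionGroup 2) ⧸ K))
    (hH : IsMaximalAbelian H) :
    ∃ ψ : MulAut ((Fin 3 → QuaternionGroup 2) ⧸ K),
      ψ ∈ Subgroup.closure {ψ' : MulAut ((Fin 3 → QuaternionGroup 2) ⧸ K) |
        (∃ φ : Fin 3 → MulAut (QuaternionGroup 2),
          ∀ t, ψ' (QuotientGroup.mk' K t) = QuotientGroup.mk' K (fun l => φ l (t l))) ∨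
        (∃ σ : Equiv.Perm (Fin 3),
          ∀ t, ψ' (QuotientGroup.mk' K t) = QuotientGroup.mk' K (fun l => t (σ l)))} ∧
      (Subgroup.map ψ.toMonoidHom H =
          Subgroup.map (QuotientGroup.mk' K)
            (Subgroup.pi Set.univ fun _ => Subgroup.zpowers (QuaternionGroup.a 1)) ∨
       (Subgroup.map ψ.toMonoidHom H : Set ((Fin 3 → QuaternionGroup 2) ⧸ K)) =
          (QuotientGroup.mk' K) ''
            {t | t 0 = t 1 ∧ t 2 ∈ Subgroup.zpowers (QuaternionGroup.a 1)} ∨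
       Subgroup.map ψ.toMonoidHom H =
          Subgroup.closure
            {QuotientGroup.mk' K
                ![QuaternionGroup.a 1, QuaternionGroup.a 1, QuaternionGroup.a 1],
             QuotientGroup.mk' K
                ![QuaternionGroup.xa 0, QuaternionGroup.xa 0, QuaternionGroup.a 1],
             QuotientGroup.mk' K
                ![QuaternionGroup.a 1, QuaternionGroup.xa 0, QuaternionGroup.xa 0]}) := by
  obtain ⟨P, hSD, hP⟩ := QC.exists_SD hK hH
  rcases QC.core hSD with hI | hI | hI
  · obtain ⟨ψ, hψ, h⟩ := QC.transport hK hP hI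
    refine ⟨ψ, hψ, Or.inl ?_⟩
    ext g
    obtain ⟨s, rfl⟩ := QuotientGroup.mk'_surjective K g
    exact (h s).trans (QC.target_a hK s).symm
  · obtain ⟨ψ, hψ, h⟩ := QC.transport hK hP hI
    refine ⟨ψ, hψ, Or.inr (Or.inl ?_)⟩
    ext g
    obtain ⟨s, rfl⟩ := QuotientGroup.mk'_surjective K g
    exact (h s).trans (QC.target_b hK s).symm
  · obtain ⟨ψ, hψ, h⟩ := QC.transport hK hP hI
    refine ⟨ψ, hψ, Or.inr (Or.inr ?_)⟩
    ext g
    obtain ⟨s, rfl⟩ := QuotientGroup.mk'_surjective K g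
    exact (h s).trans (QC.target_c hK s).symm
end

section
/- Let Q₈ denote the quaternion group {±1, ±i, ±j, ±k} of order 8, and let K be the subgroup of Q₈ × Q₈ × Q₈ consisting of the triples (ε₁, ε₂, ε₃) with each ε_l ∈ {1, −1} and ε₁ε₂ε₃ = 1. Set G = (Q₈ × Q₈ × Q₈)/K. Then each of the following three subgroups of G is a maximal abelian subgroup: (a) ⟨i⟩³/K, the image of ⟨i⟩ × ⟨i⟩ × ⟨i⟩; (b) the image in G of the set {(x, x, y) : x ∈ Q₈, y ∈ ⟨i⟩}; (c) the subgroup of G generated by the images of (i,i,i), (j,j,i), and (i,j,j). -/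
def Q8K (x y z : QuaternionGroup 2) : Prop :=
  (x = 1 ∨ x = QuaternionGroup.a 2) ∧ (y = 1 ∨ y = QuaternionGroup.a 2) ∧
    (z = 1 ∨ z = QuaternionGroup.a 2) ∧ x * y * z = 1

instance (x y z : QuaternionGroup 2) : Decidable (Q8K x y z) := by
  unfold Q8K; infer_instance

/-- The group commutator, in the form in which the quotient presents it. -/
def q8c (x y : QuaternionGroup 2) : QuaternionGroup 2 := (x * y)⁻¹ * (y * x)

theorem q8_i_cases : ∀ x : QuaternionGroup 2, Q8K 1 1 (q8c x (QuaternionGroup.a 1)) →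
    ∃ n : Fin 4, QuaternionGroup.a 1 ^ (n : ℕ) = x := by decide +kernel

theorem q8_c_one : ∀ x : QuaternionGroup 2, q8c x 1 = 1 := by decide +kernel

theorem q8_sq : ∀ x y : QuaternionGroup 2, Q8K (q8c x y) (q8c x y) 1 := by decide +kernel

theorem q8_rot : ∀ x y z : QuaternionGroup 2, Q8K x y z → Q8K y z x ∧ Q8K z x y := by
  decide +kernel

theorem q8_b : ∀ x y : QuaternionGroup 2,
    Q8K (q8c x (QuaternionGroup.a 1)) (q8c y (QuaternionGroup.a 1)) 1 →
    Q8K (q8c x (QuaternionGroup.xa 0)) (q8c y (QuaternionGroup.xa 0)) 1 →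
    ∃ n : Fin 4, Q8K 1 (x⁻¹ * y) (QuaternionGroup.a 1 ^ (n : ℕ)) := by decide +kernel

theorem q8_abc : ∀ x y z : QuaternionGroup 2,
    Q8K (q8c x (.a 1)) (q8c y (.a 1)) (q8c z (.a 1)) →
    Q8K (q8c x (.xa 0)) (q8c y (.xa 0)) (q8c z (.a 1)) →
    Q8K (q8c x (.a 1)) (q8c y (.xa 0)) (q8c z (.xa 0)) →
    ∃ (m : Fin 4) (n p : Fin 2),
      Q8K ((.a 1 ^ (m : ℕ) * .xa 0 ^ (n : ℕ) * .a 1 ^ (p : ℕ))⁻¹ * x)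
        ((.a 1 ^ (m : ℕ) * .xa 0 ^ (n : ℕ) * .xa 0 ^ (p : ℕ))⁻¹ * y)
        ((.a 1 ^ (m : ℕ) * .a 1 ^ (n : ℕ) * .xa 0 ^ (p : ℕ))⁻¹ * z) := by
  decide +kernel

theorem isMaximalAbelian_of {G : Type*} [Group G] (H : Subgroup G)
    (h1 : ∀ x ∈ H, ∀ y ∈ H, x * y = y * x)
    (h2 : ∀ x, (∀ y ∈ H, x * y = y * x) → x ∈ H) : IsMaximalAbelian H := by
  refine ⟨⟨⟨fun a b => Subtype.ext (h1 a a.2 b b.2)⟩⟩, fun H' hc hle => le_antisymm ?_ hle⟩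
  intro x hx
  refine h2 x fun y hy => ?_
  have := hc.is_comm.comm (⟨x, hx⟩ : H') ⟨y, hle hy⟩
  exact congrArg Subtype.val this

/-- in `G = (Q₈ × Q₈ × Q₈)/K`, the image of `⟨i⟩ × ⟨i⟩ × ⟨i⟩`, the image
of `{(x,x,y) : x ∈ Q₈, y ∈ ⟨i⟩}`, and the subgroup generated by the images of
`(i,i,i)`, `(j,j,i)` and `(i,j,j)` are maximal abelian subgroups.
Here `Q₈ = QuaternionGroup 2`, `i = QuaternionGroup.a 1`, `j = QuaternionGroup.xa 0`,
`-1 = QuaternionGroup.a 2`. -/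
theorem stmt_4 (K : Subgroup (Fin 3 → QuaternionGroup 2)) [K.Normal]
    (hK : ∀ t, t ∈ K ↔
      ((∀ l, t l = 1 ∨ t l = QuaternionGroup.a 2) ∧ t 0 * t 1 * t 2 = 1))
    (Sb : Subgroup (Fin 3 → QuaternionGroup 2))
    (hSb : ∀ t, t ∈ Sb ↔ (t 0 = t 1 ∧ t 2 ∈ Subgroup.zpowers (QuaternionGroup.a 1))) :
    IsMaximalAbelian
      (Subgroup.map (QuotientGroup.mk' K)
        (Subgroup.pi Set.univ fun _ => Subgroup.zpowers (QuaternionGroup.a 1))) ∧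
    IsMaximalAbelian (Subgroup.map (QuotientGroup.mk' K) Sb) ∧
    IsMaximalAbelian
      (Subgroup.closure
        {QuotientGroup.mk' K
            ![QuaternionGroup.a 1, QuaternionGroup.a 1, QuaternionGroup.a 1],
         QuotientGroup.mk' K
            ![QuaternionGroup.xa 0, QuaternionGroup.xa 0, QuaternionGroup.a 1],
         QuotientGroup.mk' K
            ![QuaternionGroup.a 1, QuaternionGroup.xa 0, QuaternionGroup.xa 0]}) := by
  have hK' : ∀ t, t ∈ K ↔ Q8K (t 0) (t 1) (t 2) := by
    intro t
    rw [hK, Fin.forall_fin_succ, Fin.forall_fin_succ, Fin.forall_fin_succ]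
    simp [Q8K, and_assoc]
  have hc : ∀ s t : Fin 3 → QuaternionGroup 2,
      QuotientGroup.mk' K s * QuotientGroup.mk' K t
        = QuotientGroup.mk' K t * QuotientGroup.mk' K s ↔
      Q8K (q8c (s 0) (t 0)) (q8c (s 1) (t 1)) (q8c (s 2) (t 2)) := by
    intro s t
    rw [← map_mul, ← map_mul, QuotientGroup.mk'_apply, QuotientGroup.mk'_apply,
      QuotientGroup.eq, hK']
    rfl
  have hz : ∀ x : QuaternionGroup 2, x ∈ Subgroup.zpowers (QuaternionGroup.a 1) →
      ∀ y ∈ Subgroup.zpowers (QuaternionGroup.a 1 : QuaternionGroup 2), q8c x y = 1 := by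
    rintro _ ⟨m, rfl⟩ _ ⟨n, rfl⟩
    simp only [q8c]
    rw [inv_mul_eq_one]
    exact (Commute.refl _).zpow_zpow m n
  have hi : ∀ x : QuaternionGroup 2, Q8K 1 1 (q8c x (QuaternionGroup.a 1)) →
      x ∈ Subgroup.zpowers (QuaternionGroup.a 1) := by
    intro x hx
    obtain ⟨n, rfl⟩ := q8_i_cases x hx
    exact Subgroup.npow_mem_zpowers _ _
  have ha : (QuaternionGroup.a 1 : QuaternionGroup 2) ∈
      Subgroup.zpowers (QuaternionGroup.a 1 : QuaternionGroup 2) := Subgroup.mem_zpowers _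
  have h111 : Q8K 1 1 1 := by decide +kernel
  refine ⟨isMaximalAbelian_of _ ?_ ?_, isMaximalAbelian_of _ ?_ ?_, isMaximalAbelian_of _ ?_ ?_⟩
  · rintro _ ⟨s, hs, rfl⟩ _ ⟨t, ht, rfl⟩
    have hs' : ∀ l, s l ∈ _ := fun l => hs l (Set.mem_univ l)
    have ht' : ∀ l, t l ∈ _ := fun l => ht l (Set.mem_univ l)
    rw [hc, hz _ (hs' 0) _ (ht' 0), hz _ (hs' 1) _ (ht' 1), hz _ (hs' 2) _ (ht' 2)]
    exact h111
  · intro x hx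
    obtain ⟨t, rfl⟩ := QuotientGroup.mk'_surjective K x
    have key : ∀ s : Fin 3 → QuaternionGroup 2,
        (∀ l, s l ∈ Subgroup.zpowers (QuaternionGroup.a 1 : QuaternionGroup 2)) →
        Q8K (q8c (t 0) (s 0)) (q8c (t 1) (s 1)) (q8c (t 2) (s 2)) := fun s hs =>
      (hc t s).1 (hx _ ⟨s, fun l _ => hs l, rfl⟩)
    have k0 := key ![.a 1, 1, 1] (by
      intro l; fin_cases l; exacts [ha, one_mem _, one_mem _])
    have k1 := key ![1, .a 1, 1] (by
      intro l; fin_cases l; exacts [one_mem _, ha, one_mem _])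
    have k2 := key ![1, 1, .a 1] (by
      intro l; fin_cases l; exacts [one_mem _, one_mem _, ha])
    simp only [Matrix.cons_val, q8_c_one] at k0 k1 k2
    refine ⟨t, fun l _ => ?_, rfl⟩
    fin_cases l
    exacts [hi _ (q8_rot _ _ _ k0).1, hi _ (q8_rot _ _ _ k1).2, hi _ k2]
  · rintro _ ⟨s, hs, rfl⟩ _ ⟨t, ht, rfl⟩
    obtain ⟨hs0, hs2⟩ := (hSb s).1 hs
    obtain ⟨ht0, ht2⟩ := (hSb t).1 ht
    rw [hc, hz _ hs2 _ ht2, ← hs0, ← ht0]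
    exact q8_sq _ _
  · intro x hx
    obtain ⟨t, rfl⟩ := QuotientGroup.mk'_surjective K x
    have key : ∀ s : Fin 3 → QuaternionGroup 2, s ∈ Sb →
        Q8K (q8c (t 0) (s 0)) (q8c (t 1) (s 1)) (q8c (t 2) (s 2)) := fun s hs =>
      (hc t s).1 (hx _ ⟨s, hs, rfl⟩)
    have k0 := key ![.a 1, .a 1, 1] ((hSb _).2 ⟨rfl, one_mem _⟩)
    have k1 := key ![.xa 0, .xa 0, 1] ((hSb _).2 ⟨rfl, one_mem _⟩)
    have k2 := key ![1, 1, .a 1] ((hSb _).2 ⟨rfl, ha⟩)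
    simp only [Matrix.cons_val, q8_c_one] at k0 k1 k2
    obtain ⟨n, hn⟩ := q8_b _ _ k0 k1
    refine ⟨![t 0, t 0, t 2 * (.a 1 ^ (n : ℕ))⁻¹], (hSb _).2 ⟨rfl, ?_⟩, ?_⟩
    · exact mul_mem (hi _ k2) (inv_mem (Subgroup.npow_mem_zpowers _ _))
    · rw [QuotientGroup.mk'_apply, QuotientGroup.mk'_apply, QuotientGroup.eq, hK']
      simpa using hn
  · intro x hx y hy
    refine Subgroup.closure_induction₂ (p := fun x y _ _ => Commute x y) ?_ ?_ ?_ ?_ ?_ ?_ ?_ hx hy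
    · intro x y hx hy
      rcases hx with rfl | rfl | rfl <;> rcases hy with rfl | rfl | rfl <;>
        exact (hc _ _).2 (by decide +kernel)
    · intro x _; exact Commute.one_left x
    · intro x _; exact Commute.one_right x
    · intro x y z _ _ _ h1 h2; exact Commute.mul_left h1 h2
    · intro x y z _ _ _ h1 h2; exact Commute.mul_right h1 h2
    · intro x y _ _ h; exact h.inv_left
    · intro x y _ _ h; exact h.inv_right
  · intro x hx
    obtain ⟨t, rfl⟩ := QuotientGroup.mk'_surjective K x
    have k0 := (hc t _).1 (hx _ (Subgroup.subset_closure (Or.inl rfl)))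
    have k1 := (hc t _).1 (hx _ (Subgroup.subset_closure (Or.inr (Or.inl rfl))))
    have k2 := (hc t _).1 (hx _ (Subgroup.subset_closure (Or.inr (Or.inr rfl))))
    obtain ⟨m, n, p, h⟩ := q8_abc _ _ _ k0 k1 k2
    have e : QuotientGroup.mk' K (![.a 1, .a 1, .a 1] ^ (m : ℕ) *
        ![.xa 0, .xa 0, .a 1] ^ (n : ℕ) * ![.a 1, .xa 0, .xa 0] ^ (p : ℕ))
        = QuotientGroup.mk' K t := by
      rw [QuotientGroup.mk'_apply, QuotientGroup.mk'_apply, QuotientGroup.eq, hK']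
      exact h
    rw [← e, map_mul, map_mul, map_pow, map_pow, map_pow]
    refine mul_mem (mul_mem (pow_mem ?_ _) (pow_mem ?_ _)) (pow_mem ?_ _)
    · exact Subgroup.subset_closure (Or.inl rfl)
    · exact Subgroup.subset_closure (Or.inr (Or.inl rfl))
    · exact Subgroup.subset_closure (Or.inr (Or.inr rfl))
end

section
/- Let F be an algebraically closed field of characteristic 0 with multiplicative group F^×, let Q₈ denote the quaternion group {±1, ±i, ±j, ±k} of order 8, and let K be the subgroup of F^× × Q₈ × Q₈ consisting of the triples (ε₁, ε₂, ε₃) with each ε_l ∈ {1, −1} and ε₁ε₂ε₃ = 1. Set G = (F^× × Q₈ × Q₈)/K. If H is a maximal abelian subgroup of G, then there exists an automorphism ψ of G, lying in the subgroup of Aut(G) generated by the automorphisms induced by pairs (φ₂, φ₃) of automorphisms of Q₈ acting componentwise on the two Q₈ factors, such that ψ(H) is one of the following subgroups of G: (a) (F^× × ⟨i⟩ × ⟨i⟩)/K, the image of F^× × ⟨i⟩ × ⟨i⟩; (b) the image in G of the set {(μ, x, x) : μ ∈ F^×, x ∈ Q₈}. -/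
open QuaternionGroup in
/-- the map sending `i` to `x` and `j` to `y` -/
def q8map (x y : QuaternionGroup 2) : QuaternionGroup 2 → QuaternionGroup 2
  | .a k => x ^ (ZMod.val k)
  | .xa k => y * x ^ (ZMod.val k)

theorem q8map_mul : ∀ x y : QuaternionGroup 2, x * y ≠ y * x →
    ∀ u v, q8map x y (u * v) = q8map x y u * q8map x y v := by
  decide +kernel

theorem q8map_inj : ∀ x y : QuaternionGroup 2, x * y ≠ y * x →
    ∀ u v, q8map x y u = q8map x y v → u = v := by
  decide +kernel

theorem q8_aut (x y : QuaternionGroup 2) (h : x * y ≠ y * x) :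
    ∃ φ : MulAut (QuaternionGroup 2), φ x = .a 1 ∧ φ y = .xa 0 := by
  let f : QuaternionGroup 2 →* QuaternionGroup 2 := MonoidHom.mk' (q8map x y) (q8map_mul x y h)
  have hf : Function.Injective f := fun u v => q8map_inj x y h u v
  let e : MulAut (QuaternionGroup 2) := MulEquiv.ofBijective f (Finite.injective_iff_bijective.mp hf)
  have h1 : e (.a 1) = x := by
    change q8map x y (.a 1) = x
    revert x y; decide +kernel
  have h2 : e (.xa 0) = y := by
    change q8map x y (.xa 0) = y
    revert x y; decide +kernel
  exact ⟨e.symm, by rw [← h1]; exact e.symm_apply_apply _, by rw [← h2]; exact e.symm_apply_apply _⟩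

theorem q8_comm_i (x : QuaternionGroup 2) (h : x * .a 1 = .a 1 * x) :
    x ∈ Subgroup.zpowers (QuaternionGroup.a 1 : QuaternionGroup 2) := by
  have : ∀ x : QuaternionGroup 2, x * .a 1 = .a 1 * x →
    ∃ k : Fin 4, (QuaternionGroup.a 1 : QuaternionGroup 2) ^ (k : ℕ) = x := by decide +kernel
  obtain ⟨k, rfl⟩ := this x h
  exact Subgroup.npow_mem_zpowers _ _

theorem q8_comm_set (S : Set (QuaternionGroup 2)) (hS : ∀ x ∈ S, ∀ y ∈ S, x * y = y * x) :
    ∃ φ : MulAut (QuaternionGroup 2), ∀ x ∈ S,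
      φ x ∈ Subgroup.zpowers (QuaternionGroup.a 1 : QuaternionGroup 2) := by
  by_cases h : ∃ x ∈ S, ∃ y, x * y ≠ y * x
  · obtain ⟨x, hx, y, hxy⟩ := h
    obtain ⟨φ, h1, -⟩ := q8_aut x y hxy
    refine ⟨φ, fun z hz => q8_comm_i _ ?_⟩
    rw [← h1, ← map_mul, ← map_mul, hS z hz x hx]
  · push Not at h
    exact ⟨1, fun x hx => q8_comm_i _ (h x hx _)⟩

theorem q8_diag : ∀ x y : QuaternionGroup 2,
    (x * .a 1 = .a 1 * x ↔ y * .a 1 = .a 1 * y) → (x * .xa 0 = .xa 0 * x ↔ y * .xa 0 = .xa 0 * y) →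
    y = x ∨ y = x * .a 2 := by
  decide +kernel

theorem q8_commutator : ∀ x y : QuaternionGroup 2,
    (x * y)⁻¹ * (y * x) = 1 ∨ (x * y)⁻¹ * (y * x) = .a 2 := by
  decide +kernel

theorem q8_aut_neg (φ : MulAut (QuaternionGroup 2)) : φ (.a 2) = .a 2 := by
  have h : ∀ x : QuaternionGroup 2, x * x = 1 → x ≠ 1 → x = .a 2 := by decide +kernel
  apply h
  · rw [← map_mul, show (.a 2 * .a 2 : QuaternionGroup 2) = 1 by decide +kernel, map_one]
  · intro h1
    have := φ.injective (h1.trans (map_one φ).symm)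
    revert this; decide +kernel

theorem q8_key {F : Type*} [Field F]
    (K : Subgroup (Fˣ × QuaternionGroup 2 × QuaternionGroup 2)) [K.Normal]
    (hK : ∀ t, t ∈ K ↔
      (t = 1 ∨ t = (1, QuaternionGroup.a 2, QuaternionGroup.a 2) ∨
       t = (-1, 1, QuaternionGroup.a 2) ∨ t = (-1, QuaternionGroup.a 2, 1)))
    (H : Subgroup ((Fˣ × QuaternionGroup 2 × QuaternionGroup 2) ⧸ K))
    (hH : IsMaximalAbelian H) (φ₂ φ₃ : MulAut (QuaternionGroup 2))
    (T : Subgroup (Fˣ × QuaternionGroup 2 × QuaternionGroup 2))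
    (hT : ∀ s ∈ T, ∀ t ∈ T, (s * t)⁻¹ * (t * s) ∈ K)
    (hHT : ∀ t, QuotientGroup.mk' K t ∈ H →
      QuotientGroup.mk' K (t.1, φ₂ t.2.1, φ₃ t.2.2) ∈ T.map (QuotientGroup.mk' K)) :
    ∃ ψ : MulAut ((Fˣ × QuaternionGroup 2 × QuaternionGroup 2) ⧸ K),
      ψ ∈ Subgroup.closure
        {ψ' : MulAut ((Fˣ × QuaternionGroup 2 × QuaternionGroup 2) ⧸ K) |
          ∃ φ₂ φ₃ : MulAut (QuaternionGroup 2),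
            ∀ t, ψ' (QuotientGroup.mk' K t) =
              QuotientGroup.mk' K (t.1, φ₂ t.2.1, φ₃ t.2.2)} ∧
      Subgroup.map ψ.toMonoidHom H = T.map (QuotientGroup.mk' K) := by
  let e : (Fˣ × QuaternionGroup 2 × QuaternionGroup 2) ≃*
      (Fˣ × QuaternionGroup 2 × QuaternionGroup 2) :=
    (MulEquiv.refl Fˣ).prodCongr (MulEquiv.prodCongr φ₂ φ₃)
  have he : ∀ t, e t = (t.1, φ₂ t.2.1, φ₃ t.2.2) := fun t => rfl
  have heK : ∀ t, t ∈ K → e t ∈ K := by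
    intro t ht
    rw [hK] at ht ⊢
    rcases ht with rfl | rfl | rfl | rfl
    · left; simp
    · right; left; simp [he, q8_aut_neg]
    · right; right; left; simp [he, q8_aut_neg]
    · right; right; right; simp [he, q8_aut_neg]
  have hmap : K.map e = K := by
    have hfin : (K : Set (Fˣ × QuaternionGroup 2 × QuaternionGroup 2)).Finite := by
      have : (K : Set (Fˣ × QuaternionGroup 2 × QuaternionGroup 2)) ⊆
        {1, (1, QuaternionGroup.a 2, QuaternionGroup.a 2),
          (-1, 1, QuaternionGroup.a 2), (-1, QuaternionGroup.a 2, 1)} := by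
        intro t ht
        simpa using (hK t).1 ht
      exact Set.Finite.subset (by simp) this
    have hle : (e '' (K : Set (Fˣ × QuaternionGroup 2 × QuaternionGroup 2))) ⊆ K := by
      rintro _ ⟨t, ht, rfl⟩
      exact heK t ht
    apply SetLike.coe_injective
    exact Set.eq_of_subset_of_ncard_le hle (Set.ncard_image_of_injective _ e.injective).ge hfin
  let ψ : MulAut ((Fˣ × QuaternionGroup 2 × QuaternionGroup 2) ⧸ K) :=
    QuotientGroup.congr K K e hmap
  have hψ : ∀ t, ψ (QuotientGroup.mk' K t) =
      QuotientGroup.mk' K (t.1, φ₂ t.2.1, φ₃ t.2.2) := fun t => rfl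
  refine ⟨ψ, Subgroup.subset_closure ⟨φ₂, φ₃, hψ⟩, ?_⟩
  have hcomm : IsMulCommutative
      (Subgroup.comap ψ.toMonoidHom (T.map (QuotientGroup.mk' K))) := by
    refine ⟨⟨?_⟩⟩
    rintro ⟨u, s, hs, hsu⟩ ⟨v, t, ht, htv⟩
    apply Subtype.ext
    change u * v = v * u
    apply ψ.injective
    rw [map_mul, map_mul]
    change _ = ψ u at hsu
    change _ = ψ v at htv
    rw [← hsu, ← htv, ← map_mul, ← map_mul]
    exact QuotientGroup.eq.2 (hT s hs t ht)
  have hle : H ≤ Subgroup.comap ψ.toMonoidHom (T.map (QuotientGroup.mk' K)) := by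
    intro g hg
    obtain ⟨t, rfl⟩ := QuotientGroup.mk'_surjective K g
    exact hHT t hg
  rw [← hH.2 _ hcomm hle]
  exact Subgroup.map_comap_eq_self_of_surjective ψ.surjective _

/-- any maximal abelian subgroup of `G = (F^× × Q₈ × Q₈)/K` can be
moved, by an automorphism of `G` lying in the subgroup of `Aut G` generated by
the automorphisms induced by pairs of automorphisms of `Q₈` acting componentwise
on the two `Q₈` factors, onto the image of `F^× × ⟨i⟩ × ⟨i⟩` or onto the image of
`{(μ,x,x) : μ ∈ F^×, x ∈ Q₈}`.  Here `Q₈ = QuaternionGroup 2`,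
`i = QuaternionGroup.a 1`, `-1 = QuaternionGroup.a 2`, and
`K = {(1,1,1), (1,-1,-1), (-1,1,-1), (-1,-1,1)}`. -/
theorem stmt_5 {F : Type*} [Field F] [IsAlgClosed F] [CharZero F]
    (K : Subgroup (Fˣ × QuaternionGroup 2 × QuaternionGroup 2)) [K.Normal]
    (hK : ∀ t, t ∈ K ↔
      (t = 1 ∨ t = (1, QuaternionGroup.a 2, QuaternionGroup.a 2) ∨
       t = (-1, 1, QuaternionGroup.a 2) ∨ t = (-1, QuaternionGroup.a 2, 1)))
    (H : Subgroup ((Fˣ × QuaternionGroup 2 × QuaternionGroup 2) ⧸ K))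
    (hH : IsMaximalAbelian H) :
    ∃ ψ : MulAut ((Fˣ × QuaternionGroup 2 × QuaternionGroup 2) ⧸ K),
      ψ ∈ Subgroup.closure
        {ψ' : MulAut ((Fˣ × QuaternionGroup 2 × QuaternionGroup 2) ⧸ K) |
          ∃ φ₂ φ₃ : MulAut (QuaternionGroup 2),
            ∀ t, ψ' (QuotientGroup.mk' K t) =
              QuotientGroup.mk' K (t.1, φ₂ t.2.1, φ₃ t.2.2)} ∧
      ((Subgroup.map ψ.toMonoidHom H :
          Set ((Fˣ × QuaternionGroup 2 × QuaternionGroup 2) ⧸ K)) =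
        (QuotientGroup.mk' K) ''
          {t | t.2.1 ∈ Subgroup.zpowers (QuaternionGroup.a 1) ∧
               t.2.2 ∈ Subgroup.zpowers (QuaternionGroup.a 1)} ∨
       (Subgroup.map ψ.toMonoidHom H :
          Set ((Fˣ × QuaternionGroup 2 × QuaternionGroup 2) ⧸ K)) =
        (QuotientGroup.mk' K) '' {t | t.2.1 = t.2.2}) := by
  have hab : ∀ s t, QuotientGroup.mk' K s ∈ H → QuotientGroup.mk' K t ∈ H →
      (s.2.1 * t.2.1 = t.2.1 * s.2.1 ↔ s.2.2 * t.2.2 = t.2.2 * s.2.2) := by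
    intro s t hs ht
    have h1 : QuotientGroup.mk' K s * QuotientGroup.mk' K t =
        QuotientGroup.mk' K t * QuotientGroup.mk' K s :=
      congrArg Subtype.val (hH.1.is_comm.comm (⟨_, hs⟩ : H) ⟨_, ht⟩)
    rw [← map_mul, ← map_mul] at h1
    have h2 : (s * t)⁻¹ * (t * s) ∈ K := QuotientGroup.eq.1 h1
    have hne : (1 : Fˣ) ≠ -1 := by
      intro h
      have : (1 : F) = -1 := by simpa using congrArg Units.val h
      have h2 : (2 : F) = 0 := by linear_combination this
      exact two_ne_zero h2
    have h0 : ((s * t)⁻¹ * (t * s)).1 = 1 :=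
      inv_mul_eq_one.2 (mul_comm _ _)
    have ha : (QuaternionGroup.a 2 : QuaternionGroup 2) ≠ 1 := by decide +kernel
    have e1 : s.2.1 * t.2.1 = t.2.1 * s.2.1 ↔ ((s * t)⁻¹ * (t * s)).2.1 = 1 :=
      inv_mul_eq_one.symm
    have e2 : s.2.2 * t.2.2 = t.2.2 * s.2.2 ↔ ((s * t)⁻¹ * (t * s)).2.2 = 1 :=
      inv_mul_eq_one.symm
    rw [e1, e2]
    rw [hK] at h2
    rcases h2 with h | h | h | h
    · rw [h]; exact ⟨fun _ => rfl, fun _ => rfl⟩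
    · rw [h]
    · rw [h] at h0; exact absurd h0.symm hne
    · rw [h] at h0; exact absurd h0.symm hne
  by_cases hc : ∃ s t, QuotientGroup.mk' K s ∈ H ∧ QuotientGroup.mk' K t ∈ H ∧
      s.2.1 * t.2.1 ≠ t.2.1 * s.2.1
  · obtain ⟨s, t, hs, ht, hst⟩ := hc
    obtain ⟨φ₂, hx, hx'⟩ := q8_aut _ _ hst
    obtain ⟨φ₃, hy, hy'⟩ := q8_aut _ _ (fun h => hst ((hab s t hs ht).2 h))
    let T : Subgroup (Fˣ × QuaternionGroup 2 × QuaternionGroup 2) :=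
      { carrier := {t | t.2.1 = t.2.2}
        mul_mem' := fun {a b} (ha : a.2.1 = a.2.2) (hb : b.2.1 = b.2.2) => by
          change a.2.1 * b.2.1 = a.2.2 * b.2.2
          rw [ha, hb]
        one_mem' := rfl
        inv_mem' := fun {a} (ha : a.2.1 = a.2.2) => by
          change a.2.1⁻¹ = a.2.2⁻¹
          rw [ha] }
    obtain ⟨ψ, hψ, hψH⟩ := q8_key K hK H hH φ₂ φ₃ T (by
      rintro ⟨m, x, x'⟩ (rfl : x = x') ⟨n, y, y'⟩ (rfl : y = y')
      have h0 : (m * n)⁻¹ * (n * m) = 1 := inv_mul_eq_one.2 (mul_comm _ _)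
      change ((m * n)⁻¹ * (n * m), (x * y)⁻¹ * (y * x), (x * y)⁻¹ * (y * x)) ∈ K
      rw [h0, hK]
      rcases q8_commutator x y with h | h <;> rw [h]
      · left; rfl
      · right; left; rfl) (by
      intro r hr
      have c1 := hab r s hr hs
      have c2 := hab r t hr ht
      have d : ∀ (φ : MulAut (QuaternionGroup 2)) (u v : QuaternionGroup 2),
          u * v = v * u ↔ φ u * φ v = φ v * φ u := fun φ u v => by
        rw [← map_mul, ← map_mul, φ.injective.eq_iff]
      rw [d φ₂ r.2.1, d φ₃ r.2.2, hx, hy] at c1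
      rw [d φ₂ r.2.1, d φ₃ r.2.2, hx', hy'] at c2
      rcases q8_diag _ _ c1 c2 with h | h
      · exact ⟨_, h.symm, rfl⟩
      · refine ⟨(-r.1, φ₂ r.2.1, φ₂ r.2.1), rfl, ?_⟩
        refine QuotientGroup.eq.2 ?_
        rw [hK, h]
        right; right; left
        change ((-r.1)⁻¹ * r.1, (φ₂ r.2.1)⁻¹ * φ₂ r.2.1, (φ₂ r.2.1)⁻¹ * (φ₂ r.2.1 * _)) = _
        rw [inv_mul_cancel, inv_mul_cancel_left]
        congr 1
        rw [inv_mul_eq_iff_eq_mul]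
        simp)
    refine ⟨ψ, hψ, Or.inr ?_⟩
    rw [hψH]
    rfl
  · push Not at hc
    obtain ⟨φ₂, h2⟩ := q8_comm_set {x | ∃ s, QuotientGroup.mk' K s ∈ H ∧ s.2.1 = x} (by
      rintro _ ⟨s, hs, rfl⟩ _ ⟨t, ht, rfl⟩
      exact hc s t hs ht)
    obtain ⟨φ₃, h3⟩ := q8_comm_set {x | ∃ s, QuotientGroup.mk' K s ∈ H ∧ s.2.2 = x} (by
      rintro _ ⟨s, hs, rfl⟩ _ ⟨t, ht, rfl⟩
      exact (hab s t hs ht).1 (hc s t hs ht))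
    let Z : Subgroup (QuaternionGroup 2) := Subgroup.zpowers (QuaternionGroup.a 1)
    have hZ : ∀ x ∈ Z, ∀ y ∈ Z, x * y = y * x := by
      rintro _ ⟨m, rfl⟩ _ ⟨n, rfl⟩
      exact zpow_mul_comm _ m n
    let T : Subgroup (Fˣ × QuaternionGroup 2 × QuaternionGroup 2) :=
      (⊤ : Subgroup Fˣ).prod (Z.prod Z)
    obtain ⟨ψ, hψ, hψH⟩ := q8_key K hK H hH φ₂ φ₃ T (by
      rintro ⟨m, x, x'⟩ ⟨-, hx, hx'⟩ ⟨n, y, y'⟩ ⟨-, hy, hy'⟩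
      have : ((m, x, x') : Fˣ × QuaternionGroup 2 × QuaternionGroup 2) * (n, y, y') =
          (n, y, y') * (m, x, x') :=
        Prod.ext (mul_comm m n) (Prod.ext (hZ x hx y hy) (hZ x' hx' y' hy'))
      rw [this, inv_mul_cancel]
      exact K.one_mem) (by
      intro r hr
      exact ⟨_, ⟨trivial, h2 _ ⟨r, hr, rfl⟩, h3 _ ⟨r, hr, rfl⟩⟩, rfl⟩)
    refine ⟨ψ, hψ, Or.inl ?_⟩
    rw [hψH, Subgroup.coe_map]
    congr 1
    ext t
    exact ⟨fun h => h.2, fun h => ⟨trivial, h⟩⟩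
end

section
/- Let F be a field of characteristic 0 and let (U,Q) be a quadratic space with basis u₁, v₁, …, u_m, v_m, w₁, …, w_{2l+1} (so dim U = 2m + 2l + 1) such that Q(u_i) = Q(v_i) = 0 and b_Q(u_i, v_i) = 1 for 1 ≤ i ≤ m, Q(w_j) = 1 for 1 ≤ j ≤ 2l+1, and any two distinct basis vectors other than the pairs {u_i, v_i} are orthogonal for the polar form b_Q. In the Clifford algebra Cl(U,Q), let z = (ι(u₁)ι(v₁) − ι(v₁)ι(u₁)) ⋯ (ι(u_m)ι(v_m) − ι(v_m)ι(u_m)) · ι(w₁) ⋯ ι(w_{2l+1}). Then z·x = x·z for every x ∈ Cl(U,Q), and z² = (−1)^l · 1. -/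
open CliffordAlgebra QuadraticMap

theorem aux_prod_comm {A : Type*} [Ring A] (n : ℕ) (f : Fin n → A) (e : Fin n → ℤ) (x : A)
    (h : ∀ j, f j * x = e j • (x * f j)) :
    (List.ofFn f).prod * x = (∏ j, e j) • (x * (List.ofFn f).prod) := by
  induction n with
  | zero => simp
  | succ n ih =>
    have := ih (fun j => f j.succ) (fun j => e j.succ) (fun j => h j.succ)
    rw [List.ofFn_succ, List.prod_cons, mul_assoc, this, Fin.prod_univ_succ, mul_smul_comm,
      ← mul_assoc, h 0, smul_mul_assoc, smul_smul, mul_assoc, mul_comm (e 0)]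

theorem aux_prod_sq {A : Type*} [Ring A] (n : ℕ) (f : Fin n → A) (e : ℤ)
    (h : ∀ i j, i ≠ j → f i * f j = e • (f j * f i)) (h1 : ∀ i, f i * f i = 1) :
    (List.ofFn f).prod * (List.ofFn f).prod = (e ^ (n.choose 2)) • (1 : A) := by
  induction n with
  | zero => simp
  | succ n ih =>
    have h2 := ih (fun j => f j.succ)
      (fun i j hij => h _ _ (fun hh => hij (Fin.succ_injective _ hh))) (fun i => h1 _)
    have h3 := aux_prod_comm n (fun j => f j.succ) (fun _ => e) (f 0)
      (fun j => h _ _ (Fin.succ_ne_zero j))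
    rw [List.ofFn_succ, List.prod_cons]
    set P := (List.ofFn fun j : Fin n => f j.succ).prod
    have : f 0 * P * (f 0 * P) = f 0 * (P * f 0) * P := by simp only [mul_assoc]
    rw [this, h3, mul_smul_comm, smul_mul_assoc, ← mul_assoc, h1, one_mul, h2, smul_smul,
      Nat.choose_succ_succ' n 1]
    simp [pow_add]

theorem aux_comm_sq {A : Type*} [Ring A] (u v : A) (hu : u * u = 0) (hv : v * v = 0)
    (h : u * v + v * u = 1) :
    (u * v - v * u) * (u * v - v * u) = 1 ∧ (u * v - v * u) * u = -(u * (u * v - v * u)) ∧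
    (u * v - v * u) * v = -(v * (u * v - v * u)) := by
  have hvu : v * u = 1 - u * v := by rw [← h]; abel
  have e1 : u * v * u = u := by rw [mul_assoc, hvu, mul_sub, ← mul_assoc, hu]; simp
  have e2 : v * u * v = v := by rw [hvu, sub_mul, mul_assoc, hv]; simp
  refine ⟨?_, ?_, ?_⟩
  · have a1 : u * v * (u * v) = u * v := by rw [← mul_assoc, e1]
    have a2 : v * u * (v * u) = v * u := by rw [← mul_assoc, e2]
    have a3 : u * v * (v * u) = 0 := by rw [mul_assoc, ← mul_assoc v, hv]; simp
    have a4 : v * u * (u * v) = 0 := by rw [mul_assoc, ← mul_assoc u, hu]; simp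
    rw [sub_mul, mul_sub, mul_sub, a1, a2, a3, a4, ← h]; abel
  · rw [sub_mul, mul_sub, e1, mul_assoc, hu, ← mul_assoc, hu, ← mul_assoc, e1]; simp
  · rw [sub_mul, mul_sub, e2, mul_assoc, hv, ← mul_assoc, e2, ← mul_assoc, hv]; simp

theorem aux_comm_of_anti {A : Type*} [Ring A] (u v x : A) (hu : u * x = -(x * u))
    (hv : v * x = -(x * v)) : (u * v - v * u) * x = x * (u * v - v * u) := by
  rw [sub_mul, mul_sub, mul_assoc, hv, mul_neg, ← mul_assoc, hu, mul_assoc v, hu, mul_neg,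
    ← mul_assoc v, hv]
  simp [mul_assoc]

/-- for a quadratic space with a basis `u₁,v₁,…,u_m,v_m,w₁,…,w_{2l+1}`
of the indicated kind, the element
`z = [ι u₁, ι v₁] ⋯ [ι u_m, ι v_m] · ι w₁ ⋯ ι w_{2l+1}` of the Clifford algebra is
central and satisfies `z² = (-1)ˡ`. -/
theorem stmt_11 {F U : Type*} [Field F] [CharZero F] [AddCommGroup U] [Module F U]
    (m l : ℕ) (u v : Fin m → U) (w : Fin (2 * l + 1) → U)
    (Q : QuadraticForm F U)
    (b : Module.Basis (Fin m ⊕ Fin m ⊕ Fin (2 * l + 1)) F U)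
    (hb : ∀ p, b p = Sum.elim u (Sum.elim v w) p)
    (hQu : ∀ i, Q (u i) = 0) (hQv : ∀ i, Q (v i) = 0)
    (hpuv : ∀ i, polar (⇑Q) (u i) (v i) = 1)
    (hQw : ∀ j, Q (w j) = 1)
    (huu : ∀ i i', i ≠ i' → polar (⇑Q) (u i) (u i') = 0)
    (hvv : ∀ i i', i ≠ i' → polar (⇑Q) (v i) (v i') = 0)
    (huv : ∀ i i', i ≠ i' → polar (⇑Q) (u i) (v i') = 0)
    (huw : ∀ i j, polar (⇑Q) (u i) (w j) = 0)
    (hvw : ∀ i j, polar (⇑Q) (v i) (w j) = 0)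
    (hww : ∀ j j', j ≠ j' → polar (⇑Q) (w j) (w j') = 0)
    (z : CliffordAlgebra Q)
    (hz : z = (List.ofFn fun i : Fin m =>
        ι Q (u i) * ι Q (v i) - ι Q (v i) * ι Q (u i)).prod *
      (List.ofFn fun j : Fin (2 * l + 1) => ι Q (w j)).prod) :
    (∀ x : CliffordAlgebra Q, z * x = x * z) ∧
    z ^ 2 = (-1 : CliffordAlgebra Q) ^ l := by
  have anti : ∀ x y : U, polar (⇑Q) x y = 0 → ι Q x * ι Q y = -(ι Q y * ι Q x) := by
    intro x y h
    have := ι_mul_ι_add_swap (Q := Q) x y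
    rw [h, map_zero] at this
    exact eq_neg_of_add_eq_zero_left this
  have anti' : ∀ x y : U, polar (⇑Q) y x = 0 → ι Q x * ι Q y = -(ι Q y * ι Q x) :=
    fun x y h => anti x y (by rw [polar_comm]; exact h)
  have hc := fun i => aux_comm_sq (ι Q (u i)) (ι Q (v i))
    (by rw [ι_sq_scalar, hQu, map_zero]) (by rw [ι_sq_scalar, hQv, map_zero])
    (by rw [ι_mul_ι_add_swap, hpuv, map_one])
  set c : Fin m → CliffordAlgebra Q :=
    fun i => ι Q (u i) * ι Q (v i) - ι Q (v i) * ι Q (u i) with hcdef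
  have cu : ∀ i k, i ≠ k → c i * ι Q (u k) = ι Q (u k) * c i := fun i k h =>
    aux_comm_of_anti _ _ _ (anti _ _ (huu _ _ h)) (anti' _ _ (huv _ _ h.symm))
  have cv : ∀ i k, i ≠ k → c i * ι Q (v k) = ι Q (v k) * c i := fun i k h =>
    aux_comm_of_anti _ _ _ (anti _ _ (huv _ _ h)) (anti _ _ (hvv _ _ h))
  have cw : ∀ i k, c i * ι Q (w k) = ι Q (w k) * c i := fun i k =>
    aux_comm_of_anti _ _ _ (anti _ _ (huw _ _)) (anti _ _ (hvw _ _))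
  have cc : ∀ i k, i ≠ k → c i * c k = c k * c i := by
    intro i k h
    have h1 : Commute (c i) (ι Q (u k)) := cu i k h
    have h2 : Commute (c i) (ι Q (v k)) := cv i k h
    exact ((h1.mul_right h2).sub_right (h2.mul_right h1)).eq
  set C := (List.ofFn c).prod with hC
  set W := (List.ofFn fun j : Fin (2 * l + 1) => ι Q (w j)).prod with hW
  have CC : C * C = 1 := by
    have := aux_prod_sq m c 1 (fun i j h => by rw [one_smul]; exact cc i j h)
      (fun i => (hc i).1)
    simpa using this
  have WW : W * W = (-1) ^ l := by
    have := aux_prod_sq (2 * l + 1) (fun j => ι Q (w j)) (-1)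
      (fun i j h => by rw [neg_one_smul]; exact anti _ _ (hww _ _ h))
      (fun i => by rw [ι_sq_scalar, hQw, map_one])
    rw [hW, this]
    have h2 : (2 * l + 1).choose 2 = 2 * (l * l) + l := by
      rw [Nat.choose_two_right]
      apply Nat.div_eq_of_eq_mul_left (by norm_num)
      simp only [Nat.add_sub_cancel]
      ring
    rw [h2, pow_add, pow_mul]
    simp
  have Cw : ∀ k, C * ι Q (w k) = ι Q (w k) * C := by
    intro k
    have := aux_prod_comm m c (fun _ => 1) (ι Q (w k)) (fun j => by rw [one_smul]; exact cw j k)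
    simpa using this
  have Cu : ∀ k, C * ι Q (u k) = -(ι Q (u k) * C) := by
    intro k
    have := aux_prod_comm m c (fun i => if i = k then -1 else 1) (ι Q (u k)) (fun j => by
      by_cases h : j = k
      · subst h; simpa using (hc j).2.1
      · simpa [h] using cu j k h)
    simpa using this
  have Cv : ∀ k, C * ι Q (v k) = -(ι Q (v k) * C) := by
    intro k
    have := aux_prod_comm m c (fun i => if i = k then -1 else 1) (ι Q (v k)) (fun j => by
      by_cases h : j = k
      · subst h; simpa using (hc j).2.2
      · simpa [h] using cv j k h)
    simpa using this
  have Wanti : ∀ x : U, (∀ j, polar (⇑Q) x (w j) = 0) → W * ι Q x = -(ι Q x * W) := by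
    intro x hx
    have := aux_prod_comm (2 * l + 1) (fun j => ι Q (w j)) (fun _ => -1) (ι Q x)
      (fun j => by rw [neg_one_smul]; exact anti' _ _ (hx j))
    rw [Finset.prod_const, Finset.card_univ, Fintype.card_fin, pow_succ, pow_mul] at this
    simpa [-List.ofFn_succ] using this
  have Ww : ∀ k, W * ι Q (w k) = ι Q (w k) * W := by
    intro k
    have := aux_prod_comm (2 * l + 1) (fun j => ι Q (w j)) (fun i => -1 * if i = k then -1 else 1)
      (ι Q (w k)) (fun j => by
        by_cases h : j = k
        · subst h; simp
        · simpa [h] using anti _ _ (hww j k h))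
    rw [Finset.prod_mul_distrib, Finset.prod_const, Finset.card_univ, Fintype.card_fin,
      pow_succ, pow_mul] at this
    simpa [-List.ofFn_succ] using this
  have CW : C * W = W * C := by
    have := aux_prod_comm (2 * l + 1) (fun j => ι Q (w j)) (fun _ => 1) C
      (fun j => by rw [one_smul]; exact (Cw j).symm)
    simpa [-List.ofFn_succ] using this.symm
  have zι : ∀ x : U, z * ι Q x = ι Q x * z := by
    have key : (LinearMap.mulLeft F z) ∘ₗ ι Q = (LinearMap.mulRight F z) ∘ₗ ι Q := by
      apply b.ext
      intro p
      rw [hb p]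
      simp only [LinearMap.comp_apply, LinearMap.mulLeft_apply, LinearMap.mulRight_apply, hz]
      rcases p with i | i | j
      · simp only [Sum.elim_inl]
        rw [mul_assoc, Wanti _ (huw i), mul_neg, ← mul_assoc, Cu, neg_mul, neg_neg, mul_assoc]
      · simp only [Sum.elim_inl, Sum.elim_inr]
        rw [mul_assoc, Wanti _ (hvw i), mul_neg, ← mul_assoc, Cv, neg_mul, neg_neg, mul_assoc]
      · simp only [Sum.elim_inr]
        rw [mul_assoc, Ww, ← mul_assoc, Cw, mul_assoc]
    exact fun x => LinearMap.congr_fun key x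
  refine ⟨fun x => ?_, ?_⟩
  · induction x using CliffordAlgebra.induction with
    | algebraMap r => exact (Algebra.commutes r z).symm
    | ι x => exact zι x
    | mul a b ha hb => rw [← mul_assoc, ha, mul_assoc, hb, mul_assoc]
    | add a b ha hb => rw [mul_add, add_mul, ha, hb]
  · rw [pow_two, hz]
    have : C * W * (C * W) = C * (W * C) * W := by simp only [mul_assoc]
    rw [this, ← CW, ← mul_assoc, CC, one_mul, WW]
end
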